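/- For every n ≥ 9, the symmetric function p_{(1^n)} + p_{(2,1^{n−2})} + p_{(2,2,1^{n−4})} + p_{(n−2,2)} is Schur-positive; that is, its expansion in the Schur basis {s_λ : λ ⊢ n} has nonnegative coefficients. -/

import Mathlib

open Finset MvPolynomial

/-- A partition of `n`, represented as a weakly decreasing list of positive
integers summing to `n`. -/
def IsPartitionOf (n : ℕ) (l : List ℕ) : Prop :=
  l.Pairwise (· ≥ ·) ∧ (∀ x ∈ l, 0 < x) ∧ l.sum = n

/-- `T : ℕ → ℕ → ℕ` is a semistandard Young tableau of shape `l`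
(rows weakly increase, columns strictly increase, entries are `0` outside
of the diagram; entries are 0-indexed, so entry value `k` stands for the
letter `k+1`). -/
def IsSSYT (l : List ℕ) (T : ℕ → ℕ → ℕ) : Prop :=
  (∀ i j1 j2, j1 ≤ j2 → j2 < l.getD i 0 → T i j1 ≤ T i j2) ∧
  (∀ i1 i2 j, i1 < i2 → j < l.getD i2 0 → T i1 j < T i2 j) ∧
  (∀ i j, l.getD i 0 ≤ j → T i j = 0)

/-- The tableau `T` of shape `l` has content `ν`: for every `k`, the number of
cells of the diagram of `l` whose entry is `k` equals the `(k+1)`-st part of `ν`. -/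
def HasContent (l : List ℕ) (T : ℕ → ℕ → ℕ) (ν : List ℕ) : Prop :=
  ∀ k, Nat.card {c : ℕ × ℕ // c.2 < l.getD c.1 0 ∧ T c.1 c.2 = k} = ν.getD k 0

/-- The Kostka number `K_{l,ν}`: the number of semistandard Young tableaux of
shape `l` and content `ν`. -/
noncomputable def kostka (l ν : List ℕ) : ℕ :=
  Nat.card {T : ℕ → ℕ → ℕ // IsSSYT l T ∧ HasContent l T ν}

/-- `f^λ`, the number of standard Young tableaux of shape `l`. -/
noncomputable def fSYT (l : List ℕ) : ℕ := kostka l (List.replicate l.sum 1)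

/-- Dominance order: all partial sums of `l` are at most those of `m`. -/
def DomLE (l m : List ℕ) : Prop := ∀ k, (l.take k).sum ≤ (m.take k).sum

/-- The standard immersion order: dominance together with `f^λ ≤ f^μ`. -/
def StdLE (l m : List ℕ) : Prop := DomLE l m ∧ fSYT l ≤ fSYT m

/-- Strict standard immersion order. -/
def StdLT (l m : List ℕ) : Prop := StdLE l m ∧ l ≠ m

/-- `m` covers `l` in the standard immersion poset on partitions of `n`. -/
def StdCovBy (n : ℕ) (l m : List ℕ) : Prop :=
  StdLT l m ∧ ∀ ν, IsPartitionOf n ν → StdLT l ν → ¬ StdLT ν m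

/-- `l` is a maximal element of the standard immersion poset on partitions of `n`. -/
def StdMaximal (n : ℕ) (l : List ℕ) : Prop :=
  ∀ m, IsPartitionOf n m → m ≠ l → ¬ StdLE l m

/-- The immersion order on partitions of `n`: `l ≤_I m` iff
`K_{l,α} ≤ K_{m,α}` for every partition `α` of `n`. -/
def ImmersionLE (n : ℕ) (l m : List ℕ) : Prop :=
  ∀ ν, IsPartitionOf n ν → kostka l ν ≤ kostka m ν

/-- Strict immersion order. -/
def ImmersionLT (n : ℕ) (l m : List ℕ) : Prop := ImmersionLE n l m ∧ l ≠ m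

/-- `m` covers `l` in the immersion poset on partitions of `n`. -/
def ImmersionCovBy (n : ℕ) (l m : List ℕ) : Prop :=
  ImmersionLT n l m ∧ ∀ ν, IsPartitionOf n ν → ImmersionLT n l ν → ¬ ImmersionLT n ν m

/-- The monomial symmetric polynomial `m_l` in `N` variables associated to a
partition `l` of `n`: the sum of `x^α` over all distinct exponent vectors `α`
whose nonzero entries are a rearrangement of the parts of `l`. -/
noncomputable def msymmList (N n : ℕ) (l : List ℕ) : MvPolynomial (Fin N) ℤ :=
  ∑ α ∈ (Fintype.piFinset fun _ : Fin N => Finset.range (n + 1)) |>.filter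
      (fun α => Multiset.filter (fun x => x ≠ 0) (Multiset.map α Finset.univ.val)
        = (↑l : Multiset ℕ)),
    MvPolynomial.monomial (Finsupp.equivFunOnFinite.symm α) (1 : ℤ)

/-- The parts of a `Nat.Partition` listed in weakly decreasing order. -/
def sortedParts {n : ℕ} (μ : Nat.Partition n) : List ℕ :=
  (μ.parts.sort (· ≤ ·)).reverse

/-- The Schur polynomial in `N` variables of a partition `l` of `n`, defined via
`s_l = ∑_{μ ⊢ n} K_{l,μ} m_μ`. -/
noncomputable def schurP (N n : ℕ) (l : List ℕ) : MvPolynomial (Fin N) ℤ :=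
  ∑ μ : Nat.Partition n, (kostka l (sortedParts μ) : ℤ) • msymmList N n (sortedParts μ)

/-- A symmetric polynomial of degree `n` is monomial-positive if it is a
nonnegative integer combination of the monomial symmetric polynomials `m_μ`, `μ ⊢ n`. -/
def MonomialPos (N n : ℕ) (f : MvPolynomial (Fin N) ℤ) : Prop :=
  ∃ c : Nat.Partition n → ℕ,
    f = ∑ μ : Nat.Partition n, (c μ : ℤ) • msymmList N n (sortedParts μ)

/-- The power sum symmetric polynomial `p_l = p_{l_1} p_{l_2} ⋯` in `N` variables. -/
noncomputable def powerSum (N : ℕ) (l : List ℕ) : MvPolynomial (Fin N) ℤ :=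
  (l.map fun r => ∑ i : Fin N, (X i : MvPolynomial (Fin N) ℤ) ^ r).prod


theorem det_step {R : Type*} [CommRing R] (N : ℕ) (y : Fin (N+1) → R) (b : Fin (N+1) → ℕ)
    (hb : ∀ j : Fin N, b j.castSucc ≤ b j.succ) :
    Matrix.det (Matrix.of fun i j => y i ^ b j) =
      y 0 ^ b 0 * (∏ i : Fin N, (y i.succ - y 0)) *
      ∑ m ∈ Fintype.piFinset (fun j : Fin N => Finset.Ico (b j.castSucc) (b j.succ)),
        y 0 ^ (∑ j, (b j.succ - 1 - m j)) *
          Matrix.det (Matrix.of fun i j => y (Fin.succ i) ^ m j) := by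
  classical
  let B : Matrix (Fin (N+1)) (Fin (N+1)) R := Matrix.of fun i =>
    Fin.cases (y i ^ b 0)
      (fun j => (∑ m ∈ Finset.Ico (b j.castSucc) (b j.succ), y i ^ m * y 0 ^ (b j.succ - 1 - m)) *
        (y i - y 0))
  have h1 : Matrix.det (Matrix.of fun i j => y i ^ b j) = B.det := by
    refine Matrix.det_eq_of_forall_col_eq_smul_add_pred
      (fun j => y 0 ^ (b j.succ - b j.castSucc)) ?_ ?_
    · intro i; simp [B]
    · intro i j
      simp only [B, Matrix.of_apply, Fin.cases_succ]
      rw [(Commute.all _ _).geom_sum₂_Ico_mul (hb j)]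
      ring
  have h2 : (B.submatrix Fin.succ Fin.succ).det = (∏ i : Fin N, (y i.succ - y 0)) *
      Matrix.det (Matrix.of fun (i j : Fin N) => ∑ m ∈ Finset.Ico (b j.castSucc) (b j.succ),
        y i.succ ^ m * y 0 ^ (b j.succ - 1 - m)) := by
    rw [← Matrix.det_mul_column]
    congr 1
    ext i j
    simp [B, mul_comm]
  have h3 : Matrix.det (Matrix.of fun (i j : Fin N) => ∑ m ∈ Finset.Ico (b j.castSucc) (b j.succ),
        y i.succ ^ m * y 0 ^ (b j.succ - 1 - m)) =
      ∑ m ∈ Fintype.piFinset (fun j : Fin N => Finset.Ico (b j.castSucc) (b j.succ)),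
        y 0 ^ (∑ j, (b j.succ - 1 - m j)) *
          Matrix.det (Matrix.of fun i j => y (Fin.succ i) ^ m j) := by
    rw [← Matrix.det_transpose]
    have := MultilinearMap.map_sum_finset
      (Matrix.detRowAlternating (n := Fin N) (R := R)).toMultilinearMap
      (fun (j : Fin N) (m : ℕ) => fun i : Fin N => y i.succ ^ m * y 0 ^ (b j.succ - 1 - m))
      (fun j : Fin N => Finset.Ico (b j.castSucc) (b j.succ))
    have e : (Matrix.of fun (i j : Fin N) => ∑ m ∈ Finset.Ico (b j.castSucc) (b j.succ),
        y i.succ ^ m * y 0 ^ (b j.succ - 1 - m)).transpose = fun j => 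
          ∑ m ∈ Finset.Ico (b j.castSucc) (b j.succ), fun i : Fin N => y i.succ ^ m * y 0 ^ (b j.succ - 1 - m) := by
      ext j i
      simp
    rw [e]
    refine this.trans ?_
    refine Finset.sum_congr rfl fun m _ => ?_
    rw [← Finset.prod_pow_eq_pow_sum, ← Matrix.det_mul_row, ← Matrix.det_transpose]
    change Matrix.det _ = _
    congr 1
    ext i j
    simp [mul_comm]
  rw [h1, Matrix.det_succ_row_zero, Fin.sum_univ_succ]
  have h4 : ∀ j : Fin N, B 0 j.succ = 0 := by intro j; simp [B]
  have h5 : B 0 0 = y 0 ^ b 0 := by simp [B]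
  simp only [h4, h5]
  simp only [Fin.succAbove_zero, h2, h3]
  simp
  ring

/-- Schur polynomial by branching, in the increasing convention. -/
noncomputable def Srev {R : Type*} [CommRing R] : (N : ℕ) → (Fin N → R) → (Fin N → ℕ) → R
  | 0, _, _ => 1
  | N+1, y, l => ∑ μ ∈ Fintype.piFinset (fun j : Fin N => Finset.Icc (l j.castSucc) (l j.succ)),
      Srev N (fun i => y i.succ) μ * y 0 ^ (l 0 + ∑ j : Fin N, (l j.succ - μ j))

theorem bialternant {R : Type*} [CommRing R] (N : ℕ) (y : Fin N → R) (l : Fin N → ℕ)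
    (hl : Monotone l) :
    Matrix.det (Matrix.of fun i j => y i ^ (l j + (j : ℕ))) =
      Matrix.det (Matrix.of fun i (j : Fin N) => y i ^ (j : ℕ)) * Srev N y l := by
  induction N with
  | zero => simp [Srev]
  | succ N ih =>
    have hm : ∀ j : Fin N, l j.castSucc ≤ l j.succ := fun j => hl (Fin.castSucc_lt_succ).le
    rw [det_step N y (fun j => l j + (j : ℕ)) (by intro j; have := hm j; simp; omega),
      det_step N y (fun j => (j : ℕ)) (by intro j; simp)]
    have e1 : (Fintype.piFinset fun j : Fin N => Finset.Ico ((j.castSucc : Fin (N+1)) : ℕ) (j.succ : Fin (N+1)))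
        = {fun j : Fin N => (j : ℕ)} := by
      ext m
      simp only [Fintype.mem_piFinset, Finset.mem_Ico, Finset.mem_singleton, funext_iff,
        Fin.val_castSucc, Fin.val_succ]
      exact forall_congr' fun j => by omega
    rw [e1]
    simp only [Finset.sum_singleton, Srev, Finset.mul_sum]
    symm
    refine Finset.sum_bij (fun μ _ => fun j => μ j + (j : ℕ)) ?_ ?_ ?_ ?_
    · intro μ hμ
      simp only [Fintype.mem_piFinset, Finset.mem_Ico, Finset.mem_Icc, Fin.val_castSucc, Fin.val_succ] at hμ ⊢
      intro j; have := hμ j; omega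
    · intro μ _ ν _ h
      ext j; have := congrFun h j; simpa using this
    · intro m hm'
      simp only [Fintype.mem_piFinset, Finset.mem_Ico, Fin.val_castSucc, Fin.val_succ] at hm'
      refine ⟨fun j => m j - j, ?_, ?_⟩
      · simp only [Fintype.mem_piFinset, Finset.mem_Icc]
        intro j; have := hm' j; omega
      · ext j; have := hm' j; simp; omega
    · intro μ hμ
      simp only [Fintype.mem_piFinset, Finset.mem_Icc] at hμ
      rw [ih (fun i => y i.succ) μ (by
        intro i j hij
        rcases hij.eq_or_lt with rfl | h
        · rfl
        · exact (hμ i).2.trans ((hl (by rw [Fin.le_def]; rw [Fin.lt_def] at h; simp only [Fin.val_succ, Fin.val_castSucc]; omega)).trans (hμ j).1))]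
      have : ∀ j : Fin N, l j.succ + ((j.succ : Fin (N+1)) : ℕ) - 1 - (μ j + j) = l j.succ - μ j := by
        intro j; simp; omega
      simp only [this]
      have : ∀ j : Fin N, ((j.succ : Fin (N+1)) : ℕ) - 1 - j = 0 := by
        intro j; simp
      simp only [this]
      simp [pow_add]
      ring


/-- Coefficients of the Vandermonde alternant. -/
def Ez (N : ℕ) (γ : Fin N → ℤ) : ℤ :=
  Matrix.det (Matrix.of fun i (j : Fin N) => if γ i = (j : ℤ) then (1 : ℤ) else 0)

/-- Multiplication by a power sum, on coefficients. -/
def Tp {N : ℕ} (r : ℤ) (f : (Fin N → ℤ) → ℤ) : (Fin N → ℤ) → ℤ :=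
  fun γ => ∑ i, f (γ - Pi.single i r)

structure GoodF {N : ℕ} (f : (Fin N → ℤ) → ℤ) : Prop where
  alt : ∀ γ (σ : Equiv.Perm (Fin N)), f (γ ∘ σ) = (Equiv.Perm.sign σ : ℤ) * f γ
  neg : ∀ γ i, γ i < 0 → f γ = 0

theorem GoodF.swap {N : ℕ} {f : (Fin N → ℤ) → ℤ} (hf : GoodF f) (γ : Fin N → ℤ) {a b : Fin N}
    (hab : a ≠ b) : f (γ ∘ Equiv.swap a b) = - f γ := by
  rw [hf.alt, Equiv.Perm.sign_swap hab]; simp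

theorem GoodF.inj {N : ℕ} {f : (Fin N → ℤ) → ℤ} (hf : GoodF f) (γ : Fin N → ℤ)
    (h : f γ ≠ 0) : Function.Injective γ := by
  intro a b hab
  by_contra hne
  have h1 := hf.swap γ hne
  have h2 : γ ∘ Equiv.swap a b = γ := by
    ext i
    simp only [Function.comp, Equiv.swap_apply_def]
    split_ifs with h1 h2 <;> simp_all
  rw [h2] at h1
  omega

theorem goodF_Ez (N : ℕ) : GoodF (Ez N) where
  alt γ σ := by
    unfold Ez
    have := Matrix.det_permute σ (Matrix.of fun i (j : Fin N) => if γ i = (j : ℤ) then (1 : ℤ) else 0)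
    rw [Int.cast_id] at this
    exact this
  neg γ i h := by
    unfold Ez
    apply Matrix.det_eq_zero_of_row_eq_zero i
    intro j
    have : γ i ≠ (j : ℤ) := by have := Int.natCast_nonneg (j : ℕ); omega
    simp [this]

theorem goodF_Tp {N : ℕ} {f : (Fin N → ℤ) → ℤ} (hf : GoodF f) (r : ℤ) (hr : 0 ≤ r) :
    GoodF (Tp r f) where
  alt γ σ := by
    unfold Tp
    symm
    rw [Finset.mul_sum, ← Equiv.sum_comp σ]
    refine Finset.sum_congr rfl fun i _ => ?_
    rw [← hf.alt]
    congr 1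
    ext j
    simp [Pi.single_apply]
  neg γ i h := by
    unfold Tp
    refine Finset.sum_eq_zero fun j _ => hf.neg _ i ?_
    simp only [Pi.sub_apply, Pi.single_apply]
    split_ifs <;> omega

theorem goodF_add {N : ℕ} {f g : (Fin N → ℤ) → ℤ} (hf : GoodF f) (hg : GoodF g) :
    GoodF (f + g) where
  alt γ σ := by simp [hf.alt, hg.alt, mul_add]
  neg γ i h := by simp [hf.neg γ i h, hg.neg γ i h]

theorem Ez_id (N : ℕ) : Ez N (fun i => (i : ℤ)) = 1 := by
  unfold Ez
  have : (Matrix.of fun (i j : Fin N) => if ((i : ℕ) : ℤ) = ((j : ℕ) : ℤ) then (1 : ℤ) else 0) = 1 := by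
    ext i j
    simp [Matrix.one_apply, Fin.ext_iff]
  rw [this, Matrix.det_one]

theorem Ez_perm (N : ℕ) (γ : Fin N → ℤ) (h : Ez N γ ≠ 0) :
    ∃ σ : Equiv.Perm (Fin N), γ = fun i => ((σ i : ℕ) : ℤ) := by
  have hinj := (goodF_Ez N).inj γ h
  have hr : ∀ i, ∃ j : Fin N, γ i = (j : ℤ) := by
    intro i
    by_contra! hc
    exact h (Matrix.det_eq_zero_of_row_eq_zero i (by intro j; simp [hc j]))
  choose s hs using hr
  have hsi : Function.Injective s := by
    intro a b hab; apply hinj; rw [hs, hs, hab]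
  refine ⟨Equiv.ofBijective s (Finite.injective_iff_bijective.mp hsi), ?_⟩
  ext i; simp [hs]

theorem Ez_bound (N : ℕ) (γ : Fin N → ℤ) : Ez N γ = 0 ∨ Ez N γ = 1 ∨ Ez N γ = -1 := by
  by_cases h : Ez N γ = 0
  · exact Or.inl h
  · right
    obtain ⟨σ, rfl⟩ := Ez_perm N γ h
    have := (goodF_Ez N).alt (fun i => (i : ℤ)) σ
    rw [Ez_id, mul_one] at this
    have h2 : Ez N (fun i => ((σ i : ℕ) : ℤ)) = (Equiv.Perm.sign σ : ℤ) := this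
    rw [h2]
    rcases Int.units_eq_one_or (Equiv.Perm.sign σ) with h | h <;> simp [h]

theorem Ez_lt (N : ℕ) (γ : Fin N → ℤ) (h : Ez N γ ≠ 0) (i : Fin N) : γ i < N := by
  obtain ⟨σ, rfl⟩ := Ez_perm N γ h
  have := (σ i).isLt
  simp

theorem Ez_surj (N : ℕ) (γ : Fin N → ℤ) (h : Ez N γ ≠ 0) (k : ℤ) (h0 : 0 ≤ k) (h1 : k < N) :
    ∃ i, γ i = k := by
  obtain ⟨σ, rfl⟩ := Ez_perm N γ h
  refine ⟨σ.symm ⟨k.toNat, by omega⟩, ?_⟩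
  simp [h0]

theorem Ez_sum (N : ℕ) (γ : Fin N → ℤ) (h : Ez N γ ≠ 0) (f : ℤ → ℤ) :
    ∑ i, f (γ i) = ∑ i : Fin N, f (i : ℤ) := by
  obtain ⟨σ, rfl⟩ := Ez_perm N γ h
  exact Equiv.sum_comp σ (fun i : Fin N => f ((i : ℕ) : ℤ))

theorem partA (N : ℕ) (m : ℤ) (hm : 3 ≤ m) (β : Fin N → ℤ) (hβ : Function.Injective β)
    (h0 : ∀ i, 0 ≤ β i) (hs : ∑ i, β i = ∑ i : Fin N, (i : ℤ) + (m + 2)) :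
    -1 ≤ Tp m (Tp 2 (Ez N)) β := by
  unfold Tp
  by_cases h2 : ∃ a b, a ≠ b ∧ (N : ℤ) ≤ β a ∧ (N : ℤ) ≤ β b
  · obtain ⟨a, b, hab, ha, hb⟩ := h2
    have key : ∀ j i, Ez N (β - Pi.single j m - Pi.single i 2) ≠ 0 →
        (j = a ∧ i = b) ∨ (j = b ∧ i = a) := by
      intro j i h
      have h1 := Ez_lt N _ h a
      have h2 := Ez_lt N _ h b
      simp only [Pi.sub_apply, Pi.single_apply] at h1 h2
      have h3 : a = j ∨ a = i := by
        by_contra hc; push Not at hc; simp [hc.1, hc.2] at h1; omega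
      have h4 : b = j ∨ b = i := by
        by_contra hc; push Not at hc; simp [hc.1, hc.2] at h2; omega
      rcases h3 with rfl | rfl <;> rcases h4 with rfl | rfl <;> simp_all
    have e : ∑ j, ∑ i, Ez N (β - Pi.single j m - Pi.single i 2) =
        Ez N (β - Pi.single a m - Pi.single b 2) + Ez N (β - Pi.single b m - Pi.single a 2) := by
      rw [← Finset.sum_product']
      rw [← Finset.sum_subset (s₁ := {(a, b), (b, a)}) (by intro x _; simp)]
      · rw [Finset.sum_pair]; simp [hab]
      · rintro ⟨j, i⟩ _ hn
        by_contra hc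
        have := key j i hc
        simp at hn
        grind
    rw [e]
    have hq : ¬ (Ez N (β - Pi.single a m - Pi.single b 2) ≠ 0 ∧
        Ez N (β - Pi.single b m - Pi.single a 2) ≠ 0) := by
      rintro ⟨h1, h2⟩
      have q1 := Ez_sum N _ h1 (fun z => z^2)
      rw [← Ez_sum N _ h2 (fun z => z^2)] at q1
      have z : ∑ i, (((β - Pi.single a m - Pi.single b 2 : Fin N → ℤ) i) ^ 2 -
          ((β - Pi.single b m - Pi.single a 2 : Fin N → ℤ) i) ^ 2) = 0 := by
        rw [Finset.sum_sub_distrib]; exact sub_eq_zero.mpr q1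
      rw [← Finset.sum_subset (Finset.subset_univ {a, b}), Finset.sum_pair hab] at z
      · simp [hab, hab.symm] at z
        have z2 : (m - 2) * (β a - β b) = 0 := by linarith
        rcases mul_eq_zero.mp z2 with h | h
        · omega
        · exact hab (hβ (by omega))
      · intro i _ hi
        simp only [Finset.mem_insert, Finset.mem_singleton, not_or] at hi
        simp [hi.1, hi.2]
    rcases Ez_bound N (β - Pi.single a m - Pi.single b 2) with h | h | h <;>
    rcases Ez_bound N (β - Pi.single b m - Pi.single a 2) with h' | h' | h' <;>
    simp_all
  · by_cases h1 : ∃ a, (N : ℤ) ≤ β a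
    · obtain ⟨a, ha⟩ := h1
      have hlt : ∀ i, i ≠ a → β i < N := by
        intro i hi
        by_contra hc
        exact h2 ⟨i, a, hi, by omega, ha⟩
      set e0 := Ez N (β - Pi.single a m - Pi.single a 2) with he0
      have k1 : ∀ j i, j ≠ a → i ≠ a → Ez N (β - Pi.single j m - Pi.single i 2) = 0 := by
        intro j i hj hi
        by_contra h
        have h1 := Ez_lt N _ h a
        simp [hj.symm, hi.symm] at h1
        omega
      have k2 : ∀ i, i ≠ a → Ez N (β - Pi.single a m - Pi.single i 2) =
          if β i = β a - m then - e0 else 0 := by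
        intro i hi
        split_ifs with h
        · rw [he0, ← (goodF_Ez N).swap _ hi]
          congr 1
          ext k
          simp only [Function.comp, Equiv.swap_apply_def, Pi.sub_apply, Pi.single_apply]
          grind
        · by_contra hc
          obtain ⟨k, hk⟩ := Ez_surj N _ hc (β i) (h0 i) (hlt i hi)
          simp only [Pi.sub_apply, Pi.single_apply] at hk
          have := @hβ k i
          grind
      have k3 : ∀ j, j ≠ a → Ez N (β - Pi.single j m - Pi.single a 2) =
          if β j = β a - 2 then - e0 else 0 := by
        intro i hi
        split_ifs with h
        · rw [he0, ← (goodF_Ez N).swap _ hi]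
          congr 1
          ext k
          simp only [Function.comp, Equiv.swap_apply_def, Pi.sub_apply, Pi.single_apply]
          grind
        · by_contra hc
          obtain ⟨k, hk⟩ := Ez_surj N _ hc (β i) (h0 i) (hlt i hi)
          simp only [Pi.sub_apply, Pi.single_apply] at hk
          have := @hβ k i
          grind
      have uniq : ∀ z : ℤ, ∑ i ∈ Finset.univ.erase a, (if β i = z then - e0 else 0) = - e0 ∨
          ∑ i ∈ Finset.univ.erase a, (if β i = z then - e0 else 0) = 0 := by
        intro z
        by_cases hz : ∃ i ∈ Finset.univ.erase a, β i = z
        · obtain ⟨i, hi, rfl⟩ := hz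
          left
          rw [Finset.sum_eq_single_of_mem i hi]
          · simp
          · intro b _ hb
            rw [if_neg (fun h => hb (hβ h))]
        · right
          push Not at hz
          exact Finset.sum_eq_zero fun i hi => by rw [if_neg (hz i hi)]
      have e : ∑ j, ∑ i, Ez N (β - Pi.single j m - Pi.single i 2) =
          e0 + ∑ i ∈ Finset.univ.erase a, (if β i = β a - m then - e0 else 0) +
            ∑ i ∈ Finset.univ.erase a, (if β i = β a - 2 then - e0 else 0) := by
        rw [← Finset.add_sum_erase _ _ (Finset.mem_univ a),
          ← Finset.add_sum_erase _ _ (Finset.mem_univ a)]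
        congr 1
        · congr 1
          exact Finset.sum_congr rfl fun i hi => k2 i (Finset.ne_of_mem_erase hi)
        · refine Finset.sum_congr rfl fun j hj => ?_
          rw [← k3 j (Finset.ne_of_mem_erase hj)]
          apply Finset.sum_eq_single a
          · intro i _ hi; exact k1 j i (Finset.ne_of_mem_erase hj) hi
          · simp
      rw [e]
      have b0 := Ez_bound N (β - Pi.single a m - Pi.single a 2)
      rw [← he0] at b0
      have u1 := uniq (β a - m)
      have u2 := uniq (β a - 2)
      omega
    · push Not at h1
      exfalso
      have hinj : Function.Injective (fun i => (⟨(β i).toNat, by have := h1 i; have := h0 i; omega⟩ : Fin N)) := by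
        intro i j hij
        simp only [Fin.mk.injEq] at hij
        apply hβ
        have := h0 i; have := h0 j; omega
      have := Equiv.sum_comp (Equiv.ofBijective _ (Finite.injective_iff_bijective.mp hinj)) (fun i : Fin N => ((i : ℕ) : ℤ))
      simp only [Equiv.ofBijective_apply, Int.toNat_of_nonneg (h0 _)] at this
      omega


/-- Compatibility of coefficient functions in `N + 1` and `N` variables. -/
def StableF {N : ℕ} (f : (Fin (N + 1) → ℤ) → ℤ) (g : (Fin N → ℤ) → ℤ) : Prop :=
  ∀ γ : Fin (N + 1) → ℤ, γ 0 = 0 → f γ = g (fun i => γ i.succ - 1)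

theorem stableF_Ez (N : ℕ) : StableF (Ez (N + 1)) (Ez N) := by
  intro γ h
  unfold Ez
  rw [Matrix.det_succ_row_zero, Fin.sum_univ_succ]
  have h1 : ∀ j : Fin N, (0 : ℤ) ≠ (((j.succ : Fin (N + 1)) : ℕ) : ℤ) := by
    intro j; simp; omega
  simp only [Matrix.of_apply, h, h1, if_false]
  simp only [Fin.val_zero, pow_zero, Nat.cast_zero, if_true, one_mul, mul_zero, zero_mul,
    Finset.sum_const_zero, add_zero]
  congr 1
  ext i j
  simp only [Matrix.submatrix_apply, Matrix.of_apply, Fin.succAbove_zero, Fin.val_succ]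
  push_cast
  congr 1
  apply propext
  omega

theorem stableF_Tp {N : ℕ} {f : (Fin (N + 1) → ℤ) → ℤ} {g : (Fin N → ℤ) → ℤ} (hf : GoodF f)
    (h : StableF f g) (r : ℤ) (hr : 0 < r) : StableF (Tp r f) (Tp r g) := by
  intro γ h0
  unfold Tp
  rw [Fin.sum_univ_succ, hf.neg _ 0 (by simp [h0, hr]), zero_add]
  refine Finset.sum_congr rfl fun i _ => ?_
  rw [h _ (by simp [h0])]
  congr 1
  ext j
  simp only [Pi.sub_apply, Pi.single_apply, Fin.succ_inj]
  ring

theorem stableF_add {N : ℕ} {f f' : (Fin (N + 1) → ℤ) → ℤ} {g g' : (Fin N → ℤ) → ℤ}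
    (h : StableF f g) (h' : StableF f' g') : StableF (f + f') (g + g') := by
  intro γ h0
  simp [h γ h0, h' γ h0]

/-- Coefficients of `p_1^4 + p_2 p_1^2 + p_2^2` times the Vandermonde. -/
def G4 (N : ℕ) : (Fin N → ℤ) → ℤ :=
  Tp 1 (Tp 1 (Tp 1 (Tp 1 (Ez N)))) + Tp 1 (Tp 1 (Tp 2 (Ez N))) + Tp 2 (Tp 2 (Ez N))

theorem goodF_G4 (N : ℕ) : GoodF (G4 N) := by
  have := goodF_Ez N
  unfold G4
  refine goodF_add (goodF_add ?_ ?_) ?_ <;> repeat' first | exact this | apply goodF_Tp | norm_num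

theorem stableF_G4 (N : ℕ) : StableF (G4 (N + 1)) (G4 N) := by
  have := goodF_Ez (N + 1)
  have := stableF_Ez N
  unfold G4
  refine stableF_add (stableF_add ?_ ?_) ?_ <;>
    repeat' first | assumption | apply stableF_Tp | apply goodF_Tp | norm_num

theorem strictMono_ge {N : ℕ} (β : Fin N → ℤ) (hβ : StrictMono β) (c : ℤ)
    (h0 : ∀ i, c ≤ β i) (i : Fin N) : c + (i : ℤ) ≤ β i := by
  obtain ⟨i, hi⟩ := i
  induction i with
  | zero => simpa using h0 _
  | succ i ih =>
    have h1 := ih (by omega)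
    have h2 : β ⟨i, by omega⟩ < β ⟨i + 1, hi⟩ := hβ (by simp [Fin.lt_def])
    simp only at h1 ⊢
    push_cast
    omega

theorem Tp_col1 (f : (Fin 4 → ℤ) → ℤ) (hf : GoodF f) :
    Tp 1 (Tp 1 f) ![1, 2, 3, 4] = f ![0, 1, 3, 4] := by
  have key : ∀ g : (Fin 4 → ℤ) → ℤ, GoodF g → ∀ γ δ : Fin 4 → ℤ, ∀ j : Fin 4,
      γ - Pi.single j 1 = δ →
      (∀ i, i ≠ j → ¬ Function.Injective (γ - Pi.single i 1 : Fin 4 → ℤ) ∨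
        (γ - Pi.single i 1 : Fin 4 → ℤ) 0 < 0) → Tp 1 g γ = g δ := by
    intro g hg γ δ j hj h
    unfold Tp
    rw [Finset.sum_eq_single j, hj]
    · intro i _ hi
      rcases h i hi with h | h
      · by_contra hc
        exact h (hg.inj _ hc)
      · exact hg.neg _ 0 h
    · simp
  rw [key _ (goodF_Tp hf 1 (by norm_num)) ![1, 2, 3, 4] ![0, 2, 3, 4] 0 (by decide +kernel)
    (by decide +kernel)]
  exact key _ hf ![0, 2, 3, 4] ![0, 1, 3, 4] 1 (by decide +kernel) (by decide +kernel)

theorem G4_col : 1 ≤ G4 4 ![1, 2, 3, 4] := by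
  have h := goodF_Ez 4
  have e : G4 4 ![1, 2, 3, 4] = Tp 1 (Tp 1 (Ez 4)) ![0, 1, 3, 4] + Tp 2 (Ez 4) ![0, 1, 3, 4]
      + Tp 2 (Tp 2 (Ez 4)) ![1, 2, 3, 4] := by
    rw [← Tp_col1 _ (goodF_Tp (goodF_Tp h 1 (by norm_num)) 1 (by norm_num)),
      ← Tp_col1 _ (goodF_Tp h 2 (by norm_num))]
    rfl
  rw [e]
  decide +kernel

theorem G4_pos (N : ℕ) (β : Fin N → ℤ) (hβ : StrictMono β)
    (h0 : ∀ i, 0 ≤ β i) (hs : ∑ i, β i = ∑ i : Fin N, (i : ℤ) + 4) :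
    1 ≤ G4 N β := by
  induction N with
  | zero => simp at hs
  | succ N ih =>
    by_cases hz : β 0 = 0
    · rw [stableF_G4 N β hz]
      have hs' : ∀ i : Fin N, 1 ≤ β i.succ := by
        intro i
        have := hβ (Fin.succ_pos i)
        omega
      apply ih
      · intro i j hij
        have := hβ (Fin.succ_lt_succ_iff.mpr hij)
        simp only; omega
      · intro i; have := hs' i; omega
      · rw [Fin.sum_univ_succ, Fin.sum_univ_succ (n := N) (f := fun i => ((i : ℕ) : ℤ)), hz] at hs
        simp only [Fin.val_zero, Fin.val_succ, Nat.cast_add, Nat.cast_zero, Nat.cast_one,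
          Finset.sum_add_distrib] at hs
        simp only [Finset.sum_sub_distrib]
        linarith
    · have h1 : ∀ i, 1 ≤ β i := by
        intro i
        have := h0 0
        have := hβ.monotone (Fin.zero_le i)
        omega
      have h2 := strictMono_ge β hβ 1 h1
      have hN : N ≤ 3 := by
        have : ∑ i : Fin (N + 1), (1 + (i : ℤ)) ≤ ∑ i, β i := Finset.sum_le_sum fun i _ => h2 i
        rw [Finset.sum_add_distrib, hs] at this
        simp at this
        omega
      interval_cases N
      · have e : β = ![4] := by
          ext i; fin_cases i; simpa using hs
        rw [e]; decide +kernel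
      · have a0 := h2 0
        have a1 := h2 1
        have a2 : β 0 < β 1 := hβ (by decide)
        simp [Fin.sum_univ_succ] at hs a0 a1
        have e : β = ![1, 4] ∨ β = ![2, 3] := by
          have : (β 0 = 1 ∧ β 1 = 4) ∨ (β 0 = 2 ∧ β 1 = 3) := by omega
          rcases this with ⟨p, q⟩ | ⟨p, q⟩
          · left; ext i; fin_cases i <;> simp [p, q]
          · right; ext i; fin_cases i <;> simp [p, q]
        rcases e with e | e <;> rw [e] <;> decide +kernel
      · have a0 := h2 0
        have a1 := h2 1
        have a2 := h2 2
        have a3 : β 0 < β 1 := hβ (by decide)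
        have a4 : β 1 < β 2 := hβ (by decide)
        simp [Fin.sum_univ_succ] at hs a0 a1 a2
        have e : β = ![1, 2, 4] := by
          have : β 0 = 1 ∧ β 1 = 2 ∧ β 2 = 4 := by omega
          obtain ⟨p, q, r⟩ := this
          ext i; fin_cases i <;> simp [p, q, r]
        rw [e]; decide +kernel
      · have a0 := h2 0
        have a1 := h2 1
        have a2 := h2 2
        have a3 := h2 3
        simp [Fin.sum_univ_succ] at hs a0 a1 a2 a3
        have e : β = ![1, 2, 3, 4] := by
          have : β 0 = 1 ∧ β 1 = 2 ∧ β 2 = 3 ∧ β 3 = 4 := by omega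
          obtain ⟨p, q, r, t⟩ := this
          ext i; fin_cases i <;> simp [p, q, r, t]
        rw [e]; exact G4_col

theorem partB (N : ℕ) (k : ℕ) (β : Fin N → ℤ) (hβ : StrictMono β)
    (h0 : ∀ i, 0 ≤ β i) (hs : ∑ i, β i = ∑ i : Fin N, (i : ℤ) + (4 + k)) :
    1 ≤ ((Tp 1)^[k] (G4 N)) β := by
  induction k generalizing β with
  | zero => exact G4_pos N β hβ h0 (by simpa using hs)
  | succ k ih =>
    have hg : GoodF ((Tp 1)^[k] (G4 N)) := by
      clear ih hs
      induction k with
      | zero => exact goodF_G4 N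
      | succ k ih => rw [Function.iterate_succ_apply']; exact goodF_Tp ih 1 (by norm_num)
    rw [Function.iterate_succ_apply']
    unfold Tp
    have hge := strictMono_ge β hβ 0 h0
    have hsum : ∀ j, ∑ i, (β - Pi.single j 1 : Fin N → ℤ) i = ∑ i : Fin N, (i : ℤ) + (4 + k) := by
      intro j
      simp only [Pi.sub_apply, Finset.sum_sub_distrib, hs]
      simp
      ring
    have hnn : ∀ j, 0 ≤ ((Tp 1)^[k] (G4 N)) (β - Pi.single j 1) := by
      intro j
      by_contra! hc
      have hinj := hg.inj _ hc.ne
      have hpos : ∀ i, 0 ≤ (β - Pi.single j 1 : Fin N → ℤ) i := by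
        intro i
        by_contra! hi
        exact hc.ne (hg.neg _ i hi)
      have hmono : Monotone (β - Pi.single j 1 : Fin N → ℤ) := by
        intro a b hab
        rcases hab.eq_or_lt with rfl | hlt
        · rfl
        · have := hβ hlt
          simp only [Pi.sub_apply, Pi.single_apply]
          split_ifs <;> omega
      have := ih _ (hmono.strictMono_of_injective hinj) hpos (hsum j)
      omega
    have hex : ∃ j : Fin N, (j : ℤ) < β j := by
      by_contra! hc
      have : ∑ i, β i ≤ ∑ i : Fin N, (i : ℤ) := Finset.sum_le_sum fun i _ => hc i
      push_cast at hs
      omega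
    obtain ⟨j, hj, hmin⟩ := Finset.exists_minimal (s := Finset.univ.filter fun j : Fin N => (j : ℤ) < β j)
      (by obtain ⟨j, hj⟩ := hex; exact ⟨j, by simpa using hj⟩)
    simp only [Finset.mem_filter, Finset.mem_univ, true_and] at hj hmin
    have hmono : StrictMono (β - Pi.single j 1 : Fin N → ℤ) := by
      intro a b hab
      have h1 := hβ hab
      simp only [Pi.sub_apply, Pi.single_apply]
      by_cases hb : b = j
      · subst hb
        have h2 : ¬ ((a : ℤ) < β a) := fun h => absurd (hmin h hab.le) (not_le.mpr hab)
        rw [if_neg hab.ne, if_pos rfl]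
        have := Fin.lt_def.mp hab
        omega
      · rw [if_neg hb]
        split_ifs <;> omega
    have hpos : ∀ i, 0 ≤ (β - Pi.single j 1 : Fin N → ℤ) i := by
      intro i
      simp only [Pi.sub_apply, Pi.single_apply]
      have := h0 i
      split_ifs with h
      · subst h; omega
      · omega
    have h1 := ih _ hmono hpos (hsum j)
    exact h1.trans (Finset.single_le_sum (f := fun j => ((Tp 1)^[k] (G4 N)) (β - Pi.single j 1))
      (fun i _ => hnn i) (Finset.mem_univ j))


def SSYTF (L : ℕ → ℕ) (T : ℕ → ℕ → ℕ) : Prop :=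
  (∀ i j1 j2, j1 ≤ j2 → j2 < L i → T i j1 ≤ T i j2) ∧
  (∀ i1 i2 j, i1 < i2 → j < L i2 → T i1 j < T i2 j) ∧
  (∀ i j, L i ≤ j → T i j = 0)

def ContentF (L : ℕ → ℕ) (T : ℕ → ℕ → ℕ) (A : ℕ → ℕ) : Prop :=
  ∀ k, Nat.card {c : ℕ × ℕ // c.2 < L c.1 ∧ T c.1 c.2 = k} = A k

abbrev KSet (L A : ℕ → ℕ) : Type := {T : ℕ → ℕ → ℕ // SSYTF L T ∧ ContentF L T A}

theorem content_bound {N : ℕ} {L A : ℕ → ℕ} (hL : ∀ r, N ≤ r → L r = 0) (hA : ∀ k, N ≤ k → A k = 0)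
    {T : ℕ → ℕ → ℕ} (hT : ContentF L T A) (r j : ℕ) (hj : j < L r) : T r j < N := by
  by_contra hc
  have h1 := hT (T r j)
  rw [hA _ (by omega)] at h1
  have hfin : Finite {c : ℕ × ℕ // c.2 < L c.1 ∧ T c.1 c.2 = T r j} := by
    let S : Finset (Σ _ : ℕ, ℕ) := (Finset.range N).sigma (fun r => Finset.range (L r))
    refine Finite.of_injective (β := S) (fun c => ⟨⟨c.1.1, c.1.2⟩, ?_⟩) ?_
    · simp only [S, Finset.mem_sigma, Finset.mem_range]
      refine ⟨?_, c.2.1⟩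
      by_contra hn
      have := hL c.1.1 (by omega)
      have := c.2.1
      omega
    · intro c d h
      simp only [Subtype.mk.injEq, Sigma.mk.injEq, heq_eq_eq] at h
      exact Subtype.ext (Prod.ext h.1 h.2)
  have : Nonempty {c : ℕ × ℕ // c.2 < L c.1 ∧ T c.1 c.2 = T r j} := ⟨⟨(r, j), hj, rfl⟩⟩
  have := Nat.card_pos (α := {c : ℕ × ℕ // c.2 < L c.1 ∧ T c.1 c.2 = T r j})
  omega

theorem card_skew {N : ℕ} {L M : ℕ → ℕ} (hL : ∀ r, N ≤ r → L r = 0) :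
    Nat.card {c : ℕ × ℕ // M c.1 ≤ c.2 ∧ c.2 < L c.1} = ∑ r ∈ Finset.range N, (L r - M r) := by
  have e : {c : ℕ × ℕ // M c.1 ≤ c.2 ∧ c.2 < L c.1} ≃
      ((Finset.range N).sigma (fun r => Finset.Ico (M r) (L r)) : Finset (Σ _ : ℕ, ℕ)) :=
    { toFun := fun c => ⟨⟨c.1.1, c.1.2⟩, by
        simp only [Finset.mem_sigma, Finset.mem_range, Finset.mem_Ico]
        refine ⟨?_, c.2⟩
        by_contra hn
        have := hL c.1.1 (by omega)
        have := c.2.2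
        omega⟩
      invFun := fun c => ⟨(c.1.1, c.1.2), by
        have := c.2
        simp only [Finset.mem_sigma, Finset.mem_range, Finset.mem_Ico] at this
        exact this.2⟩
      left_inv := fun c => rfl
      right_inv := fun c => rfl }
  rw [Nat.card_congr e, Nat.card_eq_fintype_card, Fintype.card_coe, Finset.card_sigma]
  simp

structure Interl (N : ℕ) (L M A : ℕ → ℕ) : Prop where
  lo : ∀ r, L (r + 1) ≤ M r
  hi : ∀ r, M r ≤ L r
  zero : ∀ r, N ≤ r → M r = 0
  size : A N = ∑ r ∈ Finset.range (N + 1), (L r - M r)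

/-- restriction of a content to letters below `N` -/
def cutA (N : ℕ) (A : ℕ → ℕ) : ℕ → ℕ := fun k => if k < N then A k else 0

theorem ssytf_ge {L : ℕ → ℕ} (hLa : Antitone L) {T : ℕ → ℕ → ℕ} (hT : SSYTF L T) (r j : ℕ)
    (hj : j < L r) : r ≤ T r j := by
  induction r with
  | zero => omega
  | succ r ih =>
    have h1 := ih (hj.trans_le (hLa (Nat.le_succ r)))
    have h2 := hT.2.1 r (r + 1) j (Nat.lt_succ_self r) hj
    omega

theorem exists_interl {N : ℕ} {L A : ℕ → ℕ} (hLa : Antitone L) (hL : ∀ r, N + 1 ≤ r → L r = 0)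
    (hA : ∀ k, N + 1 ≤ k → A k = 0) {T : ℕ → ℕ → ℕ} (hT : SSYTF L T) (hC : ContentF L T A) :
    ∃ M, Interl N L M A ∧ ∀ r j, j < L r → (T r j < N ↔ j < M r) := by
  have hb := content_bound hL hA hC
  let M : ℕ → ℕ := fun r => sInf {j | L r ≤ j ∨ N ≤ T r j}
  have hmem : ∀ r, L r ≤ M r ∨ N ≤ T r (M r) := fun r =>
    Nat.sInf_mem (s := {j | L r ≤ j ∨ N ≤ T r j}) ⟨L r, Or.inl le_rfl⟩
  have hle : ∀ r j, (L r ≤ j ∨ N ≤ T r j) → M r ≤ j := fun r j h =>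
    Nat.sInf_le (s := {j | L r ≤ j ∨ N ≤ T r j}) h
  have hiff : ∀ r j, j < L r → (T r j < N ↔ j < M r) := by
    intro r j hj
    constructor
    · intro h
      by_contra hc
      rcases hmem r with h1 | h1
      · omega
      · have := hT.1 r (M r) j (by omega) hj
        omega
    · intro h
      by_contra hc
      have := hle r j (Or.inr (by omega))
      omega
  have hi : ∀ r, M r ≤ L r := fun r => hle r _ (Or.inl le_rfl)
  refine ⟨M, ⟨?_, hi, ?_, ?_⟩, hiff⟩
  · intro r
    by_contra hc
    have h1 : M r < L (r + 1) := by omega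
    have h2 := hLa (Nat.le_succ r)
    have h3 := (hiff r (M r) (by simp only [Nat.succ_eq_add_one] at h2; omega)).not.mpr (by omega)
    have h4 := hT.2.1 r (r + 1) (M r) (by omega) h1
    have h5 := hb (r + 1) (M r) h1
    omega
  · intro r hr
    have : M r ≤ 0 := by
      apply hle
      by_cases h : L r ≤ 0
      · exact Or.inl h
      · right
        have := ssytf_ge hLa hT r 0 (by omega)
        omega
    omega
  · rw [← card_skew hL, ← hC N]
    refine Nat.card_congr (Equiv.subtypeEquivRight fun c => ?_)
    constructor
    · rintro ⟨h1, h2⟩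
      refine ⟨?_, h1⟩
      have := (hiff c.1 c.2 h1).not.mp (by omega)
      omega
    · rintro ⟨h1, h2⟩
      refine ⟨h2, ?_⟩
      have := (hiff c.1 c.2 h2).not.mpr (by omega)
      have := hb c.1 c.2 h2
      omega

def fiberEquiv {N : ℕ} {L M A : ℕ → ℕ} (hLa : Antitone L) (hL : ∀ r, N + 1 ≤ r → L r = 0)
    (hA : ∀ k, N + 1 ≤ k → A k = 0) (hM : Interl N L M A) :
    {T : KSet L A // ∀ r j, j < L r → (T.1 r j < N ↔ j < M r)} ≃ KSet M (cutA N A) where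
  toFun T := ⟨fun r j => if j < M r then T.1.1 r j else 0, by
    obtain ⟨⟨T, hT, hC⟩, hR⟩ := T
    simp only at hR
    simp only [SSYTF, ContentF]
    refine ⟨⟨?_, ?_, ?_⟩, ?_⟩
    · intro i j1 j2 h1 h2
      rw [if_pos h2, if_pos (by omega)]
      exact hT.1 i j1 j2 h1 (h2.trans_le (hM.hi i))
    · intro i1 i2 j h1 h2
      have h3 : M i2 ≤ M i1 := (hM.hi i2).trans ((hLa h1).trans (hM.lo i1))
      rw [if_pos h2, if_pos (by omega)]
      exact hT.2.1 i1 i2 j h1 (h2.trans_le (hM.hi i2))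
    · intro i j h
      rw [if_neg (by omega)]
    · intro k
      unfold cutA
      split_ifs with hk
      · rw [← hC k]
        refine Nat.card_congr (Equiv.subtypeEquivRight fun c => ?_)
        constructor
        · rintro ⟨h1, h2⟩
          rw [if_pos h1] at h2
          exact ⟨h1.trans_le (hM.hi _), h2⟩
        · rintro ⟨h1, h2⟩
          have := (hR c.1 c.2 h1).mp (by omega)
          rw [if_pos this]
          exact ⟨this, h2⟩
      · have : IsEmpty {c : ℕ × ℕ // c.2 < M c.1 ∧ (if c.2 < M c.1 then T c.1 c.2 else 0) = k} := by
          refine ⟨?_⟩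
          rintro ⟨c, h1, h2⟩
          rw [if_pos h1] at h2
          have := (hR c.1 c.2 (h1.trans_le (hM.hi _))).mpr h1
          omega
        exact Nat.card_of_isEmpty⟩
  invFun T := ⟨⟨fun r j => if j < M r then T.1 r j else if j < L r then N else 0, by
    obtain ⟨T, hT, hC⟩ := T
    have hb := content_bound (N := N) hM.zero (by intro k hk; simp [cutA, hk]) hC
    simp only [SSYTF, ContentF]
    refine ⟨⟨?_, ?_, ?_⟩, ?_⟩
    · intro i j1 j2 h1 h2
      have := hT.1 i j1 j2 h1
      have := hb i j1
      split_ifs <;> first | omega | (simp_all; try omega)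
    · intro i1 i2 j h1 h2
      have h3 : j < M i1 := h2.trans_le ((hLa h1).trans (hM.lo i1))
      have := hT.2.1 i1 i2 j h1
      have := hb i1 j h3
      rw [if_pos h3]
      split_ifs <;> first | omega | (simp_all; try omega)
    · intro i j h
      have := hM.hi i
      rw [if_neg (by omega), if_neg (by omega)]
    · intro k
      rcases lt_trichotomy k N with hk | hk | hk
      · have : A k = cutA N A k := by simp [cutA, hk]
        rw [this, ← hC k]
        refine Nat.card_congr (Equiv.subtypeEquivRight fun c => ?_)
        have := hM.hi c.1
        constructor
        · rintro ⟨h1, h2⟩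
          split_ifs at h2 with h3
          · exact ⟨h3, h2⟩
          · omega
        · rintro ⟨h1, h2⟩
          rw [if_pos h1]
          exact ⟨by omega, h2⟩
      · subst hk
        rw [hM.size, ← card_skew hL]
        refine Nat.card_congr (Equiv.subtypeEquivRight fun c => ?_)
        have := hb c.1 c.2
        constructor
        · rintro ⟨h1, h2⟩
          split_ifs at h2 with h3
          · have := this h3; omega
          · exact ⟨by omega, h1⟩
        · rintro ⟨h1, h2⟩
          rw [if_neg (by omega), if_pos h2]
          exact ⟨h2, rfl⟩
      · rw [hA k hk]
        have : IsEmpty {c : ℕ × ℕ // c.2 < L c.1 ∧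
            (if c.2 < M c.1 then T c.1 c.2 else if c.2 < L c.1 then N else 0) = k} := by
          refine ⟨?_⟩
          rintro ⟨c, h1, h2⟩
          have := hb c.1 c.2
          split_ifs at h2 with h3
          · have := this h3; omega
          · omega
        exact Nat.card_of_isEmpty⟩, by
    obtain ⟨T, hT, hC⟩ := T
    have hb := content_bound (N := N) hM.zero (by intro k hk; simp [cutA, hk]) hC
    intro r j hj
    simp only
    have := hb r j
    split_ifs with h1
    · simp [h1, this h1]
    · simp [h1]⟩
  left_inv T := by
    obtain ⟨⟨T, hT, hC⟩, hR⟩ := T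
    have hb := content_bound hL hA hC
    apply Subtype.ext
    apply Subtype.ext
    funext r j
    simp only at hR ⊢
    have h1 := hR r j
    have h2 := hb r j
    have h3 := hT.2.2 r j
    split_ifs with h4 h5
    · rfl
    · have := (h1 h5).not.mpr h4
      have := h2 h5
      omega
    · rw [h3 (by omega)]
  right_inv T := by
    obtain ⟨T, hT, hC⟩ := T
    apply Subtype.ext
    funext r j
    simp only
    have h3 := hT.2.2 r j
    split_ifs with h4
    · rfl
    · rw [h3 (by omega)]


theorem map_Srev {R S : Type*} [CommRing R] [CommRing S] (φ : R →+* S) (N : ℕ) (y : Fin N → R)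
    (l : Fin N → ℕ) : φ (Srev N y l) = Srev N (fun i => φ (y i)) l := by
  induction N with
  | zero => simp [Srev]
  | succ N ih => simp [Srev, ih]

/-- coefficient at an exponent given by a function -/
noncomputable def cf {N : ℕ} (P : MvPolynomial (Fin N) ℤ) (α : Fin N → ℕ) : ℤ :=
  coeff (Finsupp.equivFunOnFinite.symm α) P

theorem cf_rename {N : ℕ} (P : MvPolynomial (Fin N) ℤ) (e : ℕ) (α : Fin (N + 1) → ℕ) :
    cf (rename Fin.succ P * X 0 ^ e) α = if α 0 = e then cf P (fun i => α i.succ) else 0 := by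
  unfold cf
  have h : (Finsupp.equivFunOnFinite.symm α) =
      Finsupp.cons (α 0) (Finsupp.equivFunOnFinite.symm (fun i : Fin N => α i.succ)) := by
    ext i
    refine Fin.cases ?_ (fun i => ?_) i <;> simp
  have hP : MvPolynomial.finSuccEquiv ℤ N (rename Fin.succ P) = Polynomial.C P := by
    induction P using MvPolynomial.induction_on with
    | C a => simp [finSuccEquiv_apply]
    | add p q hp hq => rw [map_add, map_add, hp, hq, map_add]
    | mul_X p i hp => rw [map_mul, map_mul, hp, rename_X, finSuccEquiv_X_succ, map_mul]
  rw [h, ← finSuccEquiv_coeff_coeff, map_mul, map_pow, finSuccEquiv_X_zero, hP,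
    Polynomial.coeff_C_mul_X_pow]
  split_ifs <;> simp

theorem cf_Srev_succ (N : ℕ) (l α : Fin (N + 1) → ℕ) :
    cf (Srev (N + 1) X l) α =
      ∑ μ ∈ (Fintype.piFinset (fun j : Fin N => Finset.Icc (l j.castSucc) (l j.succ))).filter
        (fun μ => α 0 = l 0 + ∑ j : Fin N, (l j.succ - μ j)),
        cf (Srev N X μ) (fun i => α i.succ) := by
  rw [Finset.sum_filter]
  simp only [← cf_rename]
  have h : ∀ μ, rename Fin.succ (Srev N (X : Fin N → MvPolynomial (Fin N) ℤ) μ) =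
      Srev N (fun i => X i.succ) μ := by
    intro μ
    have := map_Srev (rename (R := ℤ) (Fin.succ (n := N))).toRingHom N X μ
    simpa using this
  simp only [h, Srev]
  unfold cf
  rw [coeff_sum]

def Mof {N : ℕ} (μ : Fin N → ℕ) : ℕ → ℕ := fun r =>
  if h : r < N then μ ⟨N - 1 - r, by omega⟩ else 0

theorem Mof_apply {N : ℕ} (μ : Fin N → ℕ) (i : Fin N) : Mof μ (N - 1 - i) = μ i := by
  unfold Mof
  have := i.isLt
  rw [dif_pos (by omega)]
  congr 1
  ext
  simp
  omega

theorem Mof_of {N : ℕ} (M : ℕ → ℕ) (hM : ∀ r, N ≤ r → M r = 0) :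
    Mof (fun i : Fin N => M (N - 1 - i)) = M := by
  funext r
  unfold Mof
  split_ifs with h
  · show M (N - 1 - (N - 1 - r)) = M r
    rw [show N - 1 - (N - 1 - r) = r by omega]
  · exact (hM r (by omega)).symm

theorem size_eq {N : ℕ} (L M : ℕ → ℕ) (hM : M N = 0) :
    ∑ r ∈ Finset.range (N + 1), (L r - M r) =
      L N + ∑ j : Fin N, (L (N - 1 - j) - M (N - 1 - j)) := by
  rw [Finset.sum_range_succ, Fin.sum_univ_eq_sum_range (fun j => L (N - 1 - j) - M (N - 1 - j)),
    Finset.sum_range_reflect (fun j => L j - M j), hM]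
  simp [add_comm]

theorem interl_iff {N : ℕ} (L A : ℕ → ℕ) (hL : ∀ r, N + 1 ≤ r → L r = 0) (μ : Fin N → ℕ) :
    μ ∈ (Fintype.piFinset (fun j : Fin N => Finset.Icc (L (N - j)) (L (N - 1 - j)))).filter
        (fun μ => A N = L N + ∑ j : Fin N, (L (N - 1 - j) - μ j)) ↔
      Interl N L (Mof μ) A := by
  have hz : ∀ r, N ≤ r → Mof μ r = 0 := by
    intro r hr; simp [Mof, hr]
  have e : ∀ j : Fin N, μ j = Mof μ (N - 1 - j) := fun j => (Mof_apply μ j).symm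
  simp only [Finset.mem_filter, Fintype.mem_piFinset, Finset.mem_Icc]
  constructor
  · rintro ⟨h1, h2⟩
    have h3 : ∀ r, L (r + 1) ≤ Mof μ r ∧ Mof μ r ≤ L r := by
      intro r
      by_cases hr : r < N
      · have := h1 ⟨N - 1 - r, by omega⟩
        rw [e] at this
        simp only at this
        rw [show N - (N - 1 - r) = r + 1 by omega, show N - 1 - (N - 1 - r) = r by omega] at this
        exact this
      · rw [hz r (by omega), hL (r + 1) (by omega)]
        simp
    refine ⟨fun r => (h3 r).1, fun r => (h3 r).2, hz, ?_⟩
    rw [h2, size_eq L _ (hz N le_rfl)]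
    simp only [Mof_apply]
  · intro h
    refine ⟨fun j => ?_, ?_⟩
    · rw [e]
      have := j.isLt
      refine ⟨?_, h.hi _⟩
      have h2 := h.lo (N - 1 - j)
      rwa [show N - 1 - (j : ℕ) + 1 = N - j by omega] at h2
    · rw [h.size, size_eq L _ (hz N le_rfl)]
      simp only [Mof_apply]

theorem interl_unique {N : ℕ} {L M M' A : ℕ → ℕ} (h : Interl N L M A) (h' : Interl N L M' A)
    {T : ℕ → ℕ → ℕ} (hT : ∀ r j, j < L r → (T r j < N ↔ j < M r))
    (hT' : ∀ r j, j < L r → (T r j < N ↔ j < M' r)) : M = M' := by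
  funext r
  have a := h.hi r
  have b := h'.hi r
  rcases lt_trichotomy (M r) (M' r) with hlt | he | hlt
  · have c := hT r (M r) (by omega)
    have d := hT' r (M r) (by omega)
    omega
  · exact he
  · have c := hT r (M' r) (by omega)
    have d := hT' r (M' r) (by omega)
    omega

theorem kostka_coeff (N : ℕ) (L A : ℕ → ℕ) (hLa : Antitone L) (hL : ∀ r, N ≤ r → L r = 0)
    (hA : ∀ k, N ≤ k → A k = 0) :
    Finite (KSet L A) ∧ (Nat.card (KSet L A) : ℤ) =
      cf (Srev N X (fun i : Fin N => L (N - 1 - i))) (fun i : Fin N => A (N - 1 - i)) := by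
  induction N generalizing L A with
  | zero =>
    have hu : Nonempty (Unique (KSet L A)) := by
      refine ⟨⟨⟨⟨fun _ _ => 0, ⟨by simp, by simp [hL], by simp⟩, ?_⟩⟩, ?_⟩⟩
      · intro k
        rw [hA k (Nat.zero_le k)]
        have : IsEmpty {c : ℕ × ℕ // c.2 < L c.1 ∧ 0 = k} := by
          refine ⟨?_⟩
          rintro ⟨c, h1, h2⟩
          rw [hL _ (Nat.zero_le _)] at h1
          omega
        exact Nat.card_of_isEmpty
      · rintro ⟨T, hT, hC⟩
        apply Subtype.ext
        funext r j
        exact hT.2.2 r j (by rw [hL _ (Nat.zero_le _)]; omega)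
    obtain ⟨hu⟩ := hu
    refine ⟨inferInstance, ?_⟩
    rw [Nat.card_unique]
    have : Finsupp.equivFunOnFinite.symm (fun i : Fin 0 => A (0 - 1 - i)) = 0 := by
      ext i; exact i.elim0
    simp only [Srev, cf]
    rw [this]
    simp
  | succ N ih =>
    let S := (Fintype.piFinset (fun j : Fin N => Finset.Icc (L (N - j)) (L (N - 1 - j)))).filter
        (fun μ => A N = L N + ∑ j : Fin N, (L (N - 1 - j) - μ j))
    have hex : ∀ T : KSet L A, ∃ μ : S, ∀ r j, j < L r → (T.1 r j < N ↔ j < Mof μ.1 r) := by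
      rintro ⟨T, hT, hC⟩
      obtain ⟨M, h1, h2⟩ := exists_interl hLa hL hA hT hC
      refine ⟨⟨fun i => M (N - 1 - i), ?_⟩, ?_⟩
      · rw [interl_iff L A hL, Mof_of M h1.zero]; exact h1
      · simp only [Mof_of M h1.zero]; exact h2
    choose f hf using hex
    have hfib : ∀ (μ : S) (T : KSet L A), f T = μ ↔
        ∀ r j, j < L r → (T.1 r j < N ↔ j < Mof μ.1 r) := by
      intro μ T
      constructor
      · rintro rfl; exact hf T
      · intro h
        have := interl_unique ((interl_iff L A hL _).mp (f T).2) ((interl_iff L A hL _).mp μ.2)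
          (hf T) h
        apply Subtype.ext
        funext i
        have h3 := congrFun this (N - 1 - i)
        rwa [Mof_apply, Mof_apply] at h3
    have efib : ∀ μ : S, Nonempty ({T : KSet L A // f T = μ} ≃ KSet (Mof μ.1) (cutA N A)) :=
      fun μ => ⟨(Equiv.subtypeEquivRight (hfib μ)).trans
        (fiberEquiv hLa hL hA ((interl_iff L A hL _).mp μ.2))⟩
    have hIH : ∀ μ : S, Finite (KSet (Mof μ.1) (cutA N A)) ∧
        (Nat.card (KSet (Mof μ.1) (cutA N A)) : ℤ) =
          cf (Srev N X μ.1) (fun i : Fin N => A (N - 1 - i)) := by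
      intro μ
      have hi := (interl_iff L A hL _).mp μ.2
      have h := ih (Mof μ.1) (cutA N A)
        (antitone_nat_of_succ_le fun r => (hi.hi (r + 1)).trans (hi.lo r)) hi.zero
        (by intro k hk; simp [cutA, hk])
      refine ⟨h.1, h.2.trans ?_⟩
      simp only [Mof_apply]
      congr 1
      funext i
      have := i.isLt
      rw [cutA, if_pos (by omega)]
    have hfin : ∀ μ : S, Finite {T : KSet L A // f T = μ} := by
      intro μ
      have := (hIH μ).1
      obtain ⟨e⟩ := efib μ
      exact Finite.of_equiv _ e.symm
    refine ⟨Finite.of_equiv _ (Equiv.sigmaFiberEquiv f), ?_⟩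
    rw [Nat.card_congr (Equiv.sigmaFiberEquiv f).symm, Nat.card_sigma]
    rw [cf_Srev_succ]
    have hN : ∀ j : Fin N, N - ((j.succ : Fin (N + 1)) : ℕ) = N - 1 - j := by
      intro j; simp; omega
    simp only [Fin.val_castSucc, Fin.val_zero, Nat.add_sub_cancel, Nat.sub_zero, hN]
    refine Eq.trans ?_ (Finset.sum_coe_sort S (fun μ => cf (Srev N X μ) fun i => A (N - 1 - i)))
    push_cast
    refine Finset.sum_congr rfl fun μ _ => ?_
    obtain ⟨e⟩ := efib μ
    rw [Nat.card_congr e, (hIH μ).2]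

/-- The alternant with exponents `b`. -/
noncomputable def altP (N : ℕ) (b : Fin N → ℕ) : MvPolynomial (Fin N) ℤ :=
  Matrix.det (Matrix.of fun i j => (X i : MvPolynomial (Fin N) ℤ) ^ b j)

theorem cf_altP (N : ℕ) (b α : Fin N → ℕ) :
    cf (altP N b) α = ∑ σ : Equiv.Perm (Fin N),
      (Equiv.Perm.sign σ : ℤ) * (if α = b ∘ σ then 1 else 0) := by
  unfold altP cf
  rw [← Matrix.det_transpose, Matrix.det_apply, coeff_sum]
  refine Finset.sum_congr rfl fun σ _ => ?_
  have h1 : (∏ i, (Matrix.of fun i j => (X i : MvPolynomial (Fin N) ℤ) ^ b j).transpose (σ i) i) =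
      monomial (Finsupp.equivFunOnFinite.symm (b ∘ σ)) 1 := by
    rw [monomial_eq, Finsupp.prod_fintype _ _ (by simp)]
    simp
  rw [h1, Units.smul_def, zsmul_eq_mul, ← map_intCast (C (σ := Fin N) (R := ℤ)), coeff_C_mul,
    coeff_monomial]
  congr 1
  simp only [EmbeddingLike.apply_eq_iff_eq]
  simp only [eq_comm]

theorem cf_altP_det (N : ℕ) (b α : Fin N → ℕ) :
    cf (altP N b) α = Matrix.det (Matrix.of fun i j => if α i = b j then (1 : ℤ) else 0) := by
  rw [cf_altP, ← Matrix.det_transpose, Matrix.det_apply']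
  refine Finset.sum_congr rfl fun σ _ => ?_
  rw [Int.cast_id]
  congr 1
  simp only [Matrix.transpose_apply, Matrix.of_apply]
  rw [Finset.prod_ite_zero]
  simp [funext_iff]

theorem cf_altP_perm (N : ℕ) (b α : Fin N → ℕ) (σ : Equiv.Perm (Fin N)) :
    cf (altP N b) (α ∘ σ) = (Equiv.Perm.sign σ : ℤ) * cf (altP N b) α := by
  rw [cf_altP_det, cf_altP_det]
  have := Matrix.det_permute σ (Matrix.of fun i j => if α i = b j then (1 : ℤ) else 0)
  rw [Int.cast_id] at this
  exact this

theorem perm_eq_one_of_strictMono {N : ℕ} (σ : Equiv.Perm (Fin N)) (h : StrictMono σ) : σ = 1 := by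
  have := Subsingleton.elim (StrictMono.orderIsoOfSurjective σ h σ.surjective) (OrderIso.refl _)
  ext i
  have := congrArg (fun f : Fin N ≃o Fin N => (f i : ℕ)) this
  simpa using this

theorem cf_altP_strictMono (N : ℕ) (b α : Fin N → ℕ) (hb : StrictMono b) (hα : StrictMono α) :
    cf (altP N b) α = if α = b then 1 else 0 := by
  rw [cf_altP, Finset.sum_eq_single 1]
  · simp
  · intro σ _ hσ
    rw [if_neg, mul_zero]
    rintro rfl
    apply hσ
    apply perm_eq_one_of_strictMono
    intro i j hij
    exact hb.lt_iff_lt.mp (hα hij)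
  · simp

theorem altP_ne_zero (N : ℕ) : altP N (fun j => (j : ℕ)) ≠ 0 := by
  intro h
  have := cf_altP_strictMono N (fun j => (j : ℕ)) (fun j => (j : ℕ)) (fun i j h => h) (fun i j h => h)
  rw [h] at this
  simp [cf] at this

/-- `f` gives the coefficients of `P`. -/
def RepF {N : ℕ} (P : MvPolynomial (Fin N) ℤ) (f : (Fin N → ℤ) → ℤ) : Prop :=
  ∀ α : Fin N → ℕ, cf P α = f (fun i => (α i : ℤ))

theorem rep_Ez (N : ℕ) : RepF (altP N (fun j => (j : ℕ))) (Ez N) := by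
  intro α
  rw [cf_altP_det]
  unfold Ez
  simp

theorem rep_add {N : ℕ} {P Q : MvPolynomial (Fin N) ℤ} {f g : (Fin N → ℤ) → ℤ} (h : RepF P f)
    (h' : RepF Q g) : RepF (P + Q) (f + g) := by
  intro α
  have a := h α
  have b := h' α
  unfold cf at *
  rw [coeff_add, a, b]
  rfl

theorem rep_Tp {N : ℕ} {P : MvPolynomial (Fin N) ℤ} {f : (Fin N → ℤ) → ℤ} (h : RepF P f)
    (hf : GoodF f) (r : ℕ) :
    RepF ((∑ i : Fin N, (X i : MvPolynomial (Fin N) ℤ) ^ r) * P) (Tp (r : ℤ) f) := by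
  intro α
  unfold cf Tp
  rw [Finset.sum_mul, coeff_sum]
  refine Finset.sum_congr rfl fun i _ => ?_
  rw [X_pow_eq_monomial, coeff_monomial_mul', one_mul]
  split_ifs with hle
  · have h1 : r ≤ α i := by simpa using hle i
    have h2 := h (α - Pi.single i r)
    unfold cf at h2
    have h3 : (Finsupp.equivFunOnFinite.symm α - Finsupp.single i r) =
        Finsupp.equivFunOnFinite.symm (α - Pi.single i r) := by
      ext j
      by_cases hj : j = i
      · subst hj; simp
      · simp [hj]
    rw [h3, h2]
    congr 1
    funext j
    by_cases hj : j = i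
    · subst hj; simp [h1]
    · simp [hj]
  · refine (hf.neg _ i ?_).symm
    have h1 : ¬ r ≤ α i := by
      intro h1
      apply hle
      intro j
      by_cases hj : j = i
      · subst hj; simpa using h1
      · simp [hj]
    simp
    omega

theorem Srev_symm (N : ℕ) (l : Fin N → ℕ) (hl : Monotone l) (σ : Equiv.Perm (Fin N)) :
    rename σ (Srev N (X : Fin N → MvPolynomial (Fin N) ℤ) l) = Srev N X l := by
  have h0 : rename σ (Srev N (X : Fin N → MvPolynomial (Fin N) ℤ) l) =
      Srev N (fun i => X (σ i)) l := by
    have := map_Srev (rename (R := ℤ) σ).toRingHom N X l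
    simpa using this
  rw [h0]
  have h1 := bialternant N (fun i => (X (σ i) : MvPolynomial (Fin N) ℤ)) l hl
  have h2 := bialternant N (X : Fin N → MvPolynomial (Fin N) ℤ) l hl
  have h3 := Matrix.det_permute σ (Matrix.of fun i (j : Fin N) =>
    (X i : MvPolynomial (Fin N) ℤ) ^ (l j + (j : ℕ)))
  have h4 := Matrix.det_permute σ (Matrix.of fun i (j : Fin N) =>
    (X i : MvPolynomial (Fin N) ℤ) ^ (j : ℕ))
  have h5 : (Matrix.of fun i (j : Fin N) =>
    (X (σ i) : MvPolynomial (Fin N) ℤ) ^ (l j + (j : ℕ))).det = (Matrix.of fun i (j : Fin N) =>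
    (X (σ i) : MvPolynomial (Fin N) ℤ) ^ (j : ℕ)).det * Srev N X l := by
    refine Eq.trans h3 ?_
    rw [h2, ← mul_assoc]
    congr 1
    exact h4.symm
  rw [h1] at h5
  refine mul_left_cancel₀ ?_ h5
  intro h6
  have h7 := h4.symm.trans h6
  have h8 : IsUnit (((Equiv.Perm.sign σ : ℤˣ) : ℤ) : MvPolynomial (Fin N) ℤ) := by
    rcases Int.units_eq_one_or (Equiv.Perm.sign σ) with h | h <;> simp [h]
  exact altP_ne_zero N ((mul_eq_zero.mp h7).resolve_left h8.ne_zero)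

theorem cf_Srev_perm (N : ℕ) (l : Fin N → ℕ) (hl : Monotone l) (σ : Equiv.Perm (Fin N))
    (α : Fin N → ℕ) :
    cf (Srev N X l) (α ∘ σ) = cf (Srev N X l) α := by
  unfold cf
  conv_rhs => rw [← Srev_symm N l hl σ]
  rw [← coeff_rename_mapDomain σ σ.injective]
  congr 1
  ext i
  obtain ⟨j, rfl⟩ := σ.surjective i
  rw [Finsupp.mapDomain_apply σ.injective]
  simp

theorem cf_Srev_hom (N : ℕ) (l α : Fin N → ℕ) (hl : Monotone l) (h : cf (Srev N X l) α ≠ 0) :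
    ∑ i, α i = ∑ i, l i := by
  induction N with
  | zero => simp
  | succ N ih =>
    rw [cf_Srev_succ] at h
    obtain ⟨μ, hμ, hne⟩ := Finset.exists_ne_zero_of_sum_ne_zero h
    simp only [Finset.mem_filter, Fintype.mem_piFinset, Finset.mem_Icc] at hμ
    have hm : Monotone μ := by
      intro i j hij
      rcases eq_or_lt_of_le hij with rfl | hlt
      · exact le_rfl
      · refine (hμ.1 i).2.trans (le_trans (hl ?_) (hμ.1 j).1)
        rw [Fin.le_def]
        simpa using hlt
    have := ih μ _ hm hne
    rw [Fin.sum_univ_succ, Fin.sum_univ_succ, this, hμ.2, add_assoc, ← Finset.sum_add_distrib]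
    congr 1
    refine Finset.sum_congr rfl fun j _ => ?_
    have := (hμ.1 j).2
    omega

/-- nonzero entries of an exponent vector -/
def filt {N : ℕ} (α : Fin N → ℕ) : Multiset ℕ :=
  Multiset.filter (fun x => x ≠ 0) (Multiset.map α Finset.univ.val)

theorem sum_filter_ne_zero (s : Multiset ℕ) : (Multiset.filter (fun x => x ≠ 0) s).sum = s.sum := by
  induction s using Multiset.induction_on with
  | empty => simp
  | cons a s ih =>
    by_cases h : a = 0
    · subst h
      rw [Multiset.filter_cons_of_neg _ (by simp), ih]
      simp
    · rw [Multiset.filter_cons_of_pos (p := fun x => x ≠ 0) _ h, Multiset.sum_cons, Multiset.sum_cons, ih]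

theorem filt_sum {N : ℕ} (α : Fin N → ℕ) : (filt α).sum = ∑ i, α i := by
  unfold filt
  rw [sum_filter_ne_zero]
  rfl

theorem filt_perm {N : ℕ} (α : Fin N → ℕ) (σ : Equiv.Perm (Fin N)) : filt (α ∘ σ) = filt α := by
  unfold filt
  rw [← Multiset.map_map]
  congr 2
  have := Finset.map_univ_equiv σ
  have h2 := congrArg Finset.val this
  simpa using h2

theorem exists_part {N n : ℕ} (α : Fin N → ℕ) (h : ∑ i, α i = n) :
    ∃ μ : Nat.Partition n, μ.parts = filt α := by
  refine ⟨⟨filt α, ?_, ?_⟩, rfl⟩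
  · intro i hi
    unfold filt at hi
    rw [Multiset.mem_filter] at hi
    omega
  · rw [filt_sum, h]

theorem coe_sortedParts {n : ℕ} (μ : Nat.Partition n) :
    (↑(sortedParts μ) : Multiset ℕ) = μ.parts := by
  unfold sortedParts
  rw [Multiset.coe_reverse, Multiset.sort_eq]

theorem sortedParts_pairwise {n : ℕ} (μ : Nat.Partition n) :
    (sortedParts μ).Pairwise (· ≥ ·) := by
  unfold sortedParts
  rw [List.pairwise_reverse]
  exact Multiset.pairwise_sort _ _

theorem mem_sortedParts {n : ℕ} (μ : Nat.Partition n) (x : ℕ) (h : x ∈ sortedParts μ) : 0 < x := by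
  apply μ.parts_pos
  rw [← coe_sortedParts]
  exact h

theorem sortedParts_sum {n : ℕ} (μ : Nat.Partition n) : (sortedParts μ).sum = n := by
  rw [← Multiset.sum_coe, coe_sortedParts, μ.parts_sum]

theorem length_le_sum (l : List ℕ) (h : ∀ x ∈ l, 0 < x) : l.length ≤ l.sum := by
  induction l with
  | nil => simp
  | cons a l ih =>
    have h1 := ih (fun x hx => h x (List.mem_cons_of_mem _ hx))
    have h2 := h a List.mem_cons_self
    simp only [List.length_cons, List.sum_cons]
    omega

theorem sortedParts_length {n : ℕ} (μ : Nat.Partition n) : (sortedParts μ).length ≤ n := by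
  have := length_le_sum _ (mem_sortedParts μ)
  rwa [sortedParts_sum] at this

theorem getD_antitone (l : List ℕ) (h : l.Pairwise (· ≥ ·)) : Antitone (fun i => l.getD i 0) := by
  intro i j hij
  show l.getD j 0 ≤ l.getD i 0
  by_cases hj : j < l.length
  · rw [List.getD_eq_getElem _ _ hj, List.getD_eq_getElem _ _ (lt_of_le_of_lt hij hj)]
    rcases eq_or_lt_of_le hij with rfl | hlt
    · exact le_rfl
    · exact List.pairwise_iff_getElem.mp h i j _ _ hlt
  · rw [List.getD_eq_default _ _ (by omega)]
    exact Nat.zero_le _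

/-- the parts, in increasing order, padded with zeros -/
def rowF {n : ℕ} (μ : Nat.Partition n) (N : ℕ) : Fin N → ℕ :=
  fun i => (sortedParts μ).getD (N - 1 - i) 0

theorem rowF_mono {n : ℕ} (μ : Nat.Partition n) (N : ℕ) : Monotone (rowF μ N) := by
  intro i j hij
  refine getD_antitone _ (sortedParts_pairwise μ) ?_
  have : (i : ℕ) ≤ j := hij
  omega

theorem map_fin_rev {N : ℕ} (f : ℕ → ℕ) :
    Multiset.map (fun i : Fin N => f (N - 1 - i)) Finset.univ.val =
      (↑((List.range N).map f) : Multiset ℕ) := by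
  have h1 : (fun i : Fin N => f (N - 1 - i)) = (fun i : Fin N => f i) ∘ (Fin.revPerm (n := N)) := by
    funext i
    simp only [Function.comp, Fin.revPerm_apply, Fin.val_rev]
    congr 1
    omega
  have h2 := congrArg Finset.val (Finset.map_univ_equiv (Fin.revPerm (n := N)))
  rw [h1, ← Multiset.map_map]
  simp only [Finset.map_val, Equiv.coe_toEmbedding] at h2
  rw [h2]
  have h3 : (Finset.univ : Finset (Fin N)).val = ↑(List.finRange N) := rfl
  rw [h3, Multiset.map_coe]
  congr 1
  apply List.ext_getElem <;> simp

theorem filt_rowF {n : ℕ} (μ : Nat.Partition n) (N : ℕ) (hN : n ≤ N) :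
    filt (rowF μ N) = μ.parts := by
  unfold filt rowF
  rw [map_fin_rev (fun k => (sortedParts μ).getD k 0)]
  have h1 : (List.range N).map (fun k => (sortedParts μ).getD k 0) =
      sortedParts μ ++ List.replicate (N - (sortedParts μ).length) 0 := by
    have := sortedParts_length μ
    apply List.ext_getElem
    · simp; omega
    · intro i h1 h2
      rw [List.getElem_map, List.getElem_range, List.getElem_append]
      split_ifs with h3
      · rw [List.getD_eq_getElem _ _ h3]
      · rw [List.getD_eq_default _ _ (by omega)]
        simp
  rw [h1, ← Multiset.coe_add, Multiset.filter_add]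
  rw [Multiset.filter_eq_self.mpr, Multiset.filter_eq_nil.mpr, add_zero, coe_sortedParts]
  · intro a ha
    rw [Multiset.mem_coe, List.mem_replicate] at ha
    simp [ha.2]
  · intro a ha
    have := mem_sortedParts μ a ha
    omega

theorem rowF_sum {n : ℕ} (μ : Nat.Partition n) (N : ℕ) (hN : n ≤ N) :
    ∑ i, rowF μ N i = n := by
  rw [← filt_sum, filt_rowF μ N hN, μ.parts_sum]

theorem getD_filter (l : List ℕ) (h : l.Pairwise (· ≥ ·)) (k : ℕ) :
    (l.filter (fun x => decide (x ≠ 0))).getD k 0 = l.getD k 0 := by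
  induction l generalizing k with
  | nil => simp
  | cons a l ih =>
    rw [List.pairwise_cons] at h
    by_cases ha : a = 0
    · have h0 : ∀ x ∈ a :: l, x = 0 := by
        intro x hx
        rcases List.mem_cons.mp hx with rfl | hx
        · exact ha
        · have := h.1 x hx
          omega
      have h1 : (a :: l).filter (fun x => decide (x ≠ 0)) = [] := by
        rw [List.filter_eq_nil_iff]
        intro x hx
        simp [h0 x hx]
      rw [h1]
      by_cases hk : k < (a :: l).length
      · rw [List.getD_eq_getElem _ _ hk, h0 _ (List.getElem_mem _)]
        simp
      · rw [List.getD_eq_default (a :: l) _ (by omega)]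
        simp
    · rw [List.filter_cons_of_pos (by simpa using ha)]
      cases k with
      | zero => simp
      | succ k => simpa using ih h.2 k

theorem rowF_eq {n N : ℕ} (μ : Nat.Partition n) (l : Fin N → ℕ) (hl : Monotone l)
    (h : μ.parts = filt l) : rowF μ N = l := by
  have hl' : (fun i : Fin N => Mof l (N - 1 - i)) = l := by
    funext i; exact Mof_apply l i
  set L := (List.range N).map (Mof l) with hL
  have hp : L.Pairwise (· ≥ ·) := by
    rw [hL, List.pairwise_iff_getElem]
    intro i j hi hj hij
    simp only [List.length_map, List.length_range] at hi hj
    simp only [List.getElem_map, List.getElem_range]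
    unfold Mof
    rw [dif_pos hi, dif_pos hj]
    apply hl
    rw [Fin.le_def]
    simp only
    omega
  have h1 : filt l = (↑(L.filter (fun x => decide (x ≠ 0))) : Multiset ℕ) := by
    unfold filt
    conv_lhs => rw [← hl']
    rw [map_fin_rev (Mof l)]
    rfl
  have h2 : sortedParts μ = L.filter (fun x => decide (x ≠ 0)) := by
    have hperm : (sortedParts μ).Perm (L.filter (fun x => decide (x ≠ 0))) := by
      rw [← Multiset.coe_eq_coe, coe_sortedParts, h, h1]
    exact hperm.eq_of_pairwise (fun a b _ _ h1 h2 => le_antisymm h2 h1) (sortedParts_pairwise μ)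
      (hp.filter _)
  funext i
  unfold rowF
  rw [h2, getD_filter L hp, hL]
  have hi := i.isLt
  rw [List.getD_eq_getElem _ _ (by simp; omega)]
  simp only [List.getElem_map, List.getElem_range]
  exact Mof_apply l i

theorem part_ext {n : ℕ} (μ ν : Nat.Partition n) (h : μ.parts = ν.parts) : μ = ν :=
  Nat.Partition.ext h

theorem cf_msymm {n : ℕ} (N : ℕ) (μ : Nat.Partition n) (α : Fin N → ℕ) :
    cf (msymmList N n (sortedParts μ)) α = if filt α = μ.parts then 1 else 0 := by
  classical
  unfold cf msymmList
  rw [coeff_sum]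
  simp only [coeff_monomial, EmbeddingLike.apply_eq_iff_eq]
  rw [Finset.sum_ite_eq']
  congr 1
  rw [eq_iff_iff, Finset.mem_filter, coe_sortedParts]
  constructor
  · exact fun h => h.2
  · intro h
    refine ⟨?_, h⟩
    rw [Fintype.mem_piFinset]
    intro i
    have h1 : ∑ i, α i = n := by rw [← filt_sum, h, μ.parts_sum]
    have h2 := Finset.single_le_sum (f := α) (fun i _ => Nat.zero_le _) (Finset.mem_univ i)
    rw [Finset.mem_range]
    omega

theorem cf_schurP {n : ℕ} (N : ℕ) (l : List ℕ) (α : Fin N → ℕ) :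
    cf (schurP N n l) α = ∑ μ : Nat.Partition n,
      (kostka l (sortedParts μ) : ℤ) * (if filt α = μ.parts then 1 else 0) := by
  simp only [← cf_msymm]
  unfold schurP cf
  rw [coeff_sum]
  refine Finset.sum_congr rfl fun μ _ => ?_
  rw [coeff_smul, smul_eq_mul]

theorem schurP_eq {n : ℕ} (N : ℕ) (hN : n ≤ N) (lam : Nat.Partition n) :
    schurP N n (sortedParts lam) = Srev N X (rowF lam N) := by
  ext m
  obtain ⟨α, rfl⟩ := Finsupp.equivFunOnFinite.symm.surjective m
  change cf _ α = cf _ α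
  by_cases hs : ∑ i, α i = n
  · obtain ⟨μ, hμ⟩ := exists_part α hs
    rw [cf_schurP, Finset.sum_eq_single μ]
    · rw [if_pos hμ.symm, mul_one]
      have hm : Monotone (α ∘ Tuple.sort α) := Tuple.monotone_sort α
      rw [← cf_Srev_perm N _ (rowF_mono lam N) (Tuple.sort α)]
      have hr : rowF μ N = α ∘ Tuple.sort α := rowF_eq μ _ hm (by rw [filt_perm, hμ])
      rw [← hr]
      have hz : ∀ ν : Nat.Partition n, ∀ r, N ≤ r → (sortedParts ν).getD r 0 = 0 := by
        intro ν r hr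
        have := sortedParts_length ν
        exact List.getD_eq_default _ _ (by omega)
      exact (kostka_coeff N (fun i => (sortedParts lam).getD i 0)
        (fun i => (sortedParts μ).getD i 0) (getD_antitone _ (sortedParts_pairwise lam))
        (hz lam) (hz μ)).2
    · intro ν _ hne
      rw [if_neg, mul_zero]
      intro h
      exact hne (part_ext _ _ (by rw [hμ, h]))
    · simp
  · rw [cf_schurP, Finset.sum_eq_zero]
    · by_contra hne
      have := cf_Srev_hom N _ α (rowF_mono lam N) (Ne.symm hne)
      rw [rowF_sum lam N hN] at this
      exact hs this
    · intro μ _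
      rw [if_neg, mul_zero]
      intro h
      apply hs
      rw [← filt_sum, h, μ.parts_sum]

theorem powerSum_cons (N r : ℕ) (l : List ℕ) : powerSum N (r :: l) =
    (∑ i : Fin N, (X i : MvPolynomial (Fin N) ℤ) ^ r) * powerSum N l := by
  simp [powerSum]

theorem powerSum_append (N : ℕ) (l m : List ℕ) :
    powerSum N (l ++ m) = powerSum N l * powerSum N m := by
  simp [powerSum]

theorem powerSum_nil (N : ℕ) : powerSum N [] = 1 := by simp [powerSum]

theorem goodF_iter {N : ℕ} {f : (Fin N → ℤ) → ℤ} (hf : GoodF f) (k : ℕ) :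
    GoodF ((Tp 1)^[k] f) := by
  induction k with
  | zero => exact hf
  | succ k ih =>
    rw [Function.iterate_succ_apply']
    exact goodF_Tp ih 1 (by norm_num)

theorem stableF_iter {N : ℕ} {f : (Fin (N + 1) → ℤ) → ℤ} {g : (Fin N → ℤ) → ℤ} (hf : GoodF f)
    (h : StableF f g) (k : ℕ) : StableF ((Tp 1)^[k] f) ((Tp 1)^[k] g) := by
  induction k with
  | zero => exact h
  | succ k ih =>
    rw [Function.iterate_succ_apply', Function.iterate_succ_apply']
    exact stableF_Tp (goodF_iter hf k) ih 1 (by norm_num)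

theorem repF_iter {N : ℕ} {P : MvPolynomial (Fin N) ℤ} {f : (Fin N → ℤ) → ℤ} (h : RepF P f)
    (hf : GoodF f) (k : ℕ) :
    RepF (powerSum N (List.replicate k 1) * P) ((Tp 1)^[k] f) := by
  induction k with
  | zero => simpa [powerSum_nil] using h
  | succ k ih =>
    rw [Function.iterate_succ_apply', List.replicate_succ, powerSum_cons, mul_assoc]
    exact rep_Tp ih (goodF_iter hf k) 1

/-- `f` is supported on vectors of sum `s`. -/
def HomF {N : ℕ} (f : (Fin N → ℤ) → ℤ) (s : ℤ) : Prop := ∀ γ, f γ ≠ 0 → ∑ i, γ i = s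

theorem homF_Ez (N : ℕ) : HomF (Ez N) (∑ i : Fin N, (i : ℤ)) := by
  intro γ h
  exact Ez_sum N γ h id

theorem homF_Tp {N : ℕ} {f : (Fin N → ℤ) → ℤ} {s : ℤ} (h : HomF f s) (r : ℤ) :
    HomF (Tp r f) (s + r) := by
  intro γ hγ
  obtain ⟨i, _, hi⟩ := Finset.exists_ne_zero_of_sum_ne_zero hγ
  have := h _ hi
  simp only [Pi.sub_apply, Finset.sum_sub_distrib, Finset.sum_pi_single', Finset.mem_univ,
    if_true] at this
  have h2 : ∑ x, (Pi.single i r : Fin N → ℤ) x = r := by simp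
  omega

theorem homF_add {N : ℕ} {f g : (Fin N → ℤ) → ℤ} {s : ℤ} (h : HomF f s) (h' : HomF g s) :
    HomF (f + g) s := by
  intro γ hγ
  by_cases h1 : f γ = 0
  · apply h'
    intro h2
    apply hγ
    simp [h1, h2]
  · exact h γ h1

theorem homF_iter {N : ℕ} {f : (Fin N → ℤ) → ℤ} {s : ℤ} (h : HomF f s) (k : ℕ) :
    HomF ((Tp 1)^[k] f) (s + k) := by
  induction k with
  | zero => simpa using h
  | succ k ih =>
    rw [Function.iterate_succ_apply']
    have := homF_Tp ih 1
    push_cast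
    rwa [← add_assoc]

theorem homF_G4 (N : ℕ) : HomF (G4 N) (∑ i : Fin N, (i : ℤ) + 4) := by
  have h := homF_Ez N
  have h1 := homF_Tp (homF_Tp (homF_Tp (homF_Tp h 1) 1) 1) 1
  have h2 := homF_Tp (homF_Tp (homF_Tp h 2) 1) 1
  have h3 := homF_Tp (homF_Tp h 2) 2
  have e : ∀ s : ℤ, s + 1 + 1 + 1 + 1 = s + 4 ∧ s + 2 + 1 + 1 = s + 4 ∧ s + 2 + 2 = s + 4 := by
    intro s; omega
  rw [(e _).1] at h1
  rw [(e _).2.1] at h2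
  rw [(e _).2.2] at h3
  exact homF_add (homF_add h1 h2) h3

/-- Coefficients of the symmetric function times the Vandermonde. -/
def CF (n N : ℕ) : (Fin N → ℤ) → ℤ :=
  (Tp 1)^[n - 4] (G4 N) + Tp ((n - 2 : ℕ) : ℤ) (Tp 2 (Ez N))

theorem goodF_CF (n N : ℕ) : GoodF (CF n N) :=
  goodF_add (goodF_iter (goodF_G4 N) _)
    (goodF_Tp (goodF_Tp (goodF_Ez N) 2 (by norm_num)) _ (by positivity))

theorem stableF_CF (n N : ℕ) (hn : 9 ≤ n) : StableF (CF n (N + 1)) (CF n N) :=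
  stableF_add (stableF_iter (goodF_G4 _) (stableF_G4 N) _)
    (stableF_Tp (goodF_Tp (goodF_Ez _) 2 (by norm_num))
      (stableF_Tp (goodF_Ez _) (stableF_Ez N) 2 (by norm_num)) _ (by omega))

theorem homF_CF (n N : ℕ) (hn : 9 ≤ n) : HomF (CF n N) (∑ i : Fin N, (i : ℤ) + n) := by
  have h1 := homF_iter (homF_G4 N) (n - 4)
  have h2 := homF_Tp (homF_Tp (homF_Ez N) 2) ((n - 2 : ℕ) : ℤ)
  rw [show ∑ i : Fin N, (i : ℤ) + 4 + ((n - 4 : ℕ) : ℤ) = ∑ i : Fin N, (i : ℤ) + n by omega] at h1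
  rw [show ∑ i : Fin N, (i : ℤ) + 2 + ((n - 2 : ℕ) : ℤ) = ∑ i : Fin N, (i : ℤ) + n by omega] at h2
  exact homF_add h1 h2

theorem CF_nonneg (n N : ℕ) (hn : 9 ≤ n) (β : Fin N → ℤ) (hβ : StrictMono β)
    (h0 : ∀ i, 0 ≤ β i) (hs : ∑ i, β i = ∑ i : Fin N, (i : ℤ) + n) : 0 ≤ CF n N β := by
  have h1 := partB N (n - 4) β hβ h0 (by rw [hs]; omega)
  have h2 := partA N ((n - 2 : ℕ) : ℤ) (by omega) β hβ.injective h0 (by rw [hs]; omega)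
  have : CF n N β = ((Tp 1)^[n - 4] (G4 N)) β + Tp ((n - 2 : ℕ) : ℤ) (Tp 2 (Ez N)) β := rfl
  omega

/-- exponent vector of the alternant of a partition -/
def bvec {n : ℕ} (μ : Nat.Partition n) (N : ℕ) : Fin N → ℕ := fun i => rowF μ N i + i

theorem bvec_strictMono {n : ℕ} (μ : Nat.Partition n) (N : ℕ) : StrictMono (bvec μ N) := by
  intro i j hij
  have h1 := rowF_mono μ N hij.le
  have h2 : (i : ℕ) < j := hij
  unfold bvec
  omega

theorem bvec_sum {n : ℕ} (μ : Nat.Partition n) (N : ℕ) (hN : n ≤ N) :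
    ∑ i, bvec μ N i = ∑ i : Fin N, (i : ℕ) + n := by
  unfold bvec
  rw [Finset.sum_add_distrib, rowF_sum μ N hN, add_comm]

theorem CF_bvec_nonneg {n : ℕ} (hn : 9 ≤ n) (μ : Nat.Partition n) (N : ℕ) (hN : n ≤ N) :
    0 ≤ CF n N (fun i => (bvec μ N i : ℤ)) := by
  refine CF_nonneg n N hn _ ?_ ?_ ?_
  · intro i j hij
    exact Int.ofNat_lt.mpr (bvec_strictMono μ N hij)
  · intro i; positivity
  · exact_mod_cast bvec_sum μ N hN

theorem CF_bvec_stable {n : ℕ} (hn : 9 ≤ n) (μ : Nat.Partition n) (N : ℕ) (hN : n ≤ N) :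
    CF n N (fun i => (bvec μ N i : ℤ)) = CF n n (fun i => (bvec μ n i : ℤ)) := by
  induction N, hN using Nat.le_induction with
  | base => rfl
  | succ N hN ih =>
    rw [← ih, stableF_CF n N hn]
    · congr 1
      funext i
      have h : rowF μ (N + 1) i.succ = rowF μ N i := by
        unfold rowF
        congr 1
        simp only [Fin.val_succ]
        omega
      unfold bvec
      rw [h]
      simp only [Fin.val_succ]
      push_cast
      ring
    · have h : rowF μ (N + 1) 0 = 0 := by
        have := sortedParts_length μ
        unfold rowF
        exact List.getD_eq_default _ _ (by simp; omega)
      unfold bvec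
      rw [h]
      simp

theorem repF_main (n N : ℕ) (hn : 9 ≤ n) :
    RepF ((powerSum N (List.replicate n 1) + powerSum N (2 :: List.replicate (n - 2) 1) +
          powerSum N (2 :: 2 :: List.replicate (n - 4) 1) + powerSum N [n - 2, 2]) *
        altP N (fun j => (j : ℕ))) (CF n N) := by
  obtain ⟨k, rfl⟩ : ∃ k, n = k + 4 := ⟨n - 4, by omega⟩
  have hE := rep_Ez N
  have gE := goodF_Ez N
  have g1 : GoodF (Tp 1 (Ez N)) := goodF_Tp gE 1 (by norm_num)
  have g2 : GoodF (Tp 2 (Ez N)) := goodF_Tp gE 2 (by norm_num)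
  have g11 := goodF_Tp g1 1 (by norm_num)
  have g12 := goodF_Tp g2 1 (by norm_num)
  have g111 := goodF_Tp g11 1 (by norm_num)
  have r1 := rep_Tp (rep_Tp (rep_Tp (rep_Tp hE gE 1) g1 1) g11 1) g111 1
  have r2 := rep_Tp (rep_Tp (rep_Tp hE gE 2) g2 1) g12 1
  have r3 := rep_Tp (rep_Tp hE gE 2) g2 2
  have r4 := rep_Tp (rep_Tp hE gE 2) g2 (k + 2)
  have r5 := repF_iter (rep_add (rep_add r1 r2) r3) (goodF_G4 N) k
  have r6 := rep_add r5 r4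
  have e : ∀ P Q f, P = Q → RepF (N := N) P f → RepF Q f := by
    rintro P Q f rfl h; exact h
  refine e _ _ _ ?_ r6
  have e1 : k + 4 - 2 = k + 2 := by omega
  have e2 : k + 4 - 4 = k := by omega
  rw [e1, e2, List.replicate_add, List.replicate_add]
  simp only [powerSum_cons, powerSum_append, powerSum_nil, List.replicate]
  ring

theorem alt_ext {N : ℕ} (f g : (Fin N → ℕ) → ℤ)
    (hf : ∀ γ (σ : Equiv.Perm (Fin N)), f (γ ∘ σ) = (Equiv.Perm.sign σ : ℤ) * f γ)
    (hg : ∀ γ (σ : Equiv.Perm (Fin N)), g (γ ∘ σ) = (Equiv.Perm.sign σ : ℤ) * g γ)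
    (h : ∀ γ, StrictMono γ → f γ = g γ) (γ : Fin N → ℕ) : f γ = g γ := by
  by_cases hi : Function.Injective γ
  · have h1 : StrictMono (γ ∘ Tuple.sort γ) :=
      (Tuple.monotone_sort γ).strictMono_of_injective (hi.comp (Tuple.sort γ).injective)
    have h2 := h _ h1
    rw [hf, hg] at h2
    exact mul_left_cancel₀ (by simp) h2
  · have key : ∀ f : (Fin N → ℕ) → ℤ,
        (∀ γ (σ : Equiv.Perm (Fin N)), f (γ ∘ σ) = (Equiv.Perm.sign σ : ℤ) * f γ) → f γ = 0 := by
      intro f hf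
      simp only [Function.Injective] at hi
      push Not at hi
      obtain ⟨a, b, hab, hne⟩ := hi
      have h1 := hf γ (Equiv.swap a b)
      have h2 : γ ∘ Equiv.swap a b = γ := by
        funext i
        simp only [Function.comp, Equiv.swap_apply_def]
        split_ifs with h1 h2
        · rw [h1, hab]
        · rw [h2, hab]
        · rfl
      rw [h2, Equiv.Perm.sign_swap hne] at h1
      simp at h1
      omega
    rw [key f hf, key g hg]

theorem alt_expand (n N : ℕ) (hn : 9 ≤ n) (hN : n ≤ N) (F : MvPolynomial (Fin N) ℤ)
    (hF : RepF F (CF n N)) :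
    F = ∑ μ : Nat.Partition n, CF n n (fun i => (bvec μ n i : ℤ)) • altP N (bvec μ N) := by
  have hR : ∀ α, cf (∑ μ : Nat.Partition n,
      CF n n (fun i => (bvec μ n i : ℤ)) • altP N (bvec μ N)) α =
      ∑ μ : Nat.Partition n, CF n n (fun i => (bvec μ n i : ℤ)) * cf (altP N (bvec μ N)) α := by
    intro α
    unfold cf
    rw [coeff_sum]
    refine Finset.sum_congr rfl fun μ _ => ?_
    rw [coeff_smul, smul_eq_mul]
  ext m
  obtain ⟨α, rfl⟩ := Finsupp.equivFunOnFinite.symm.surjective m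
  change cf F α = cf _ α
  refine alt_ext (fun α => cf F α) _ ?_ ?_ ?_ α
  · intro γ σ
    rw [hF, hF]
    exact (goodF_CF n N).alt (fun i => (γ i : ℤ)) σ
  · intro γ σ
    rw [hR, hR, Finset.mul_sum]
    refine Finset.sum_congr rfl fun μ _ => ?_
    rw [cf_altP_perm]
    ring
  · intro γ hγ
    rw [hF, hR]
    simp only [cf_altP_strictMono N _ γ (bvec_strictMono _ N) hγ]
    by_cases hs : ∑ i, γ i = ∑ i : Fin N, (i : ℕ) + n
    · have hle : ∀ i : Fin N, (i : ℕ) ≤ γ i := by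
        intro i
        have := strictMono_ge (fun i => (γ i : ℤ)) (fun i j h => Int.ofNat_lt.mpr (hγ h)) 0
          (fun i => by positivity) i
        omega
      have hmono : Monotone (fun i : Fin N => γ i - (i : ℕ)) := by
        have : StrictMono (fun i => γ i) := hγ
        cases N with
        | zero => intro i; exact i.elim0
        | succ N =>
          rw [Fin.monotone_iff_le_succ]
          intro i
          have h1 := hγ (Fin.castSucc_lt_succ (i := i))
          simp only [Fin.val_castSucc, Fin.val_succ]
          omega
      have hsum : ∑ i : Fin N, (γ i - (i : ℕ)) = n := by
        have h1 : ∑ i : Fin N, (γ i - (i : ℕ)) + ∑ i : Fin N, (i : ℕ) = ∑ i, γ i := by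
          rw [← Finset.sum_add_distrib]
          refine Finset.sum_congr rfl fun i _ => ?_
          have := hle i
          omega
        omega
      obtain ⟨μ, hμ⟩ := exists_part _ hsum
      have hrow := rowF_eq μ _ hmono hμ
      have hb : bvec μ N = γ := by
        funext i
        unfold bvec
        rw [hrow]
        have := hle i
        simp only
        omega
      rw [Finset.sum_eq_single μ]
      · rw [if_pos hb.symm, mul_one, ← CF_bvec_stable hn μ N hN, hb]
      · intro ν _ hne
        rw [if_neg, mul_zero]
        intro h
        apply hne
        apply part_ext
        rw [hμ, ← hrow, ← filt_rowF ν N hN]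
        congr 1
        funext i
        have h2 := congrFun (h.symm.trans hb.symm) i
        unfold bvec at h2
        omega
      · simp
    · rw [Finset.sum_eq_zero]
      · by_contra hne
        apply hs
        exact_mod_cast homF_CF n N hn _ hne
      · intro μ _
        rw [if_neg, mul_zero]
        rintro rfl
        exact hs (bvec_sum μ N hN)

/-- For `n ≥ 9`, the symmetric function
`p_{(1^n)} + p_{(2,1^{n-2})} + p_{(2,2,1^{n-4})} + p_{(n-2,2)}` is Schur-positive. -/
theorem schur_positive_interval_row (n : ℕ) (hn : 9 ≤ n) :
    ∃ c : Nat.Partition n → ℕ, ∀ N, n ≤ N →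
      powerSum N (List.replicate n 1) + powerSum N (2 :: List.replicate (n - 2) 1) +
          powerSum N (2 :: 2 :: List.replicate (n - 4) 1) + powerSum N [n - 2, 2] =
        ∑ μ : Nat.Partition n, (c μ : ℤ) • schurP N n (sortedParts μ) := by
  refine ⟨fun μ => (CF n n (fun i => (bvec μ n i : ℤ))).toNat, fun N hN => ?_⟩
  have h := alt_expand n N hn hN _ (repF_main n N hn)
  refine mul_right_cancel₀ (altP_ne_zero N) (h.trans ?_)
  rw [Finset.sum_mul]
  refine Finset.sum_congr rfl fun μ _ => ?_
  rw [Int.toNat_of_nonneg (CF_bvec_nonneg hn μ n le_rfl), schurP_eq N hN μ, smul_mul_assoc]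
  congr 1
  rw [mul_comm]
  exact bialternant N X (rowF μ N) (rowF_mono μ N)
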